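/- arXiv:1909.10943 — 3 statements merged into one kernel-verified Lean document; each statement's English description precedes it below -/
import Mathlib

section
/- Let X and Y be two nonnegative random variables such that for each positive x one has x·P(X > x) ≤ E[Y·1{X ≥ x}]. Then for each t > 0, P(X > 2t) ≤ ∫_1^∞ P(Y > s·t) ds. -/
open MeasureTheory ENNReal

/-- Layer-cake formula for the excess of `Z` over `a`. -/
theorem lintegral_ofReal_sub_eq_lintegral_Ioi_meas_lt
    {Ω : Type*} [MeasurableSpace Ω] (μ : Measure Ω) {Z : Ω → ℝ} (hZ : Measurable Z) (a : ℝ) :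
    ∫⁻ ω, ENNReal.ofReal (Z ω - a) ∂μ = ∫⁻ s in Set.Ioi a, μ {ω | s < Z ω} := by
  have hlayer := lintegral_eq_lintegral_meas_lt μ (f := fun ω => max (Z ω - a) 0)
    (Filter.Eventually.of_forall fun ω => le_max_right _ _)
    ((hZ.sub_const a).max measurable_const).aemeasurable
  have hmax : ∀ ω, ENNReal.ofReal (max (Z ω - a) 0) = ENNReal.ofReal (Z ω - a) := by
    intro ω
    rw [ENNReal.ofReal_max, ENNReal.ofReal_zero, max_eq_left zero_le]
  simp only [hmax] at hlayer
  rw [hlayer, ← lintegral_indicator measurableSet_Ioi, ← lintegral_indicator measurableSet_Ioi,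
    ← lintegral_add_right_eq_self ((Set.Ioi a).indicator fun s => μ {ω | s < Z ω}) a]
  refine lintegral_congr fun s => ?_
  by_cases hs : 0 < s
  · simp [Set.indicator, hs, lt_sub_iff_add_lt, hs.not_gt]
  · simp [Set.indicator, hs]

/-- The measure of `{a < X}` is bounded by any common bound of the measures of `{x < X}`, `x > a`. -/
theorem meas_lt_le_of_forall_gt
    {Ω : Type*} [MeasurableSpace Ω] (μ : Measure Ω) (X : Ω → ℝ) (a : ℝ) {c : ℝ≥0∞}
    (h : ∀ x, a < x → μ {ω | x < X ω} ≤ c) : μ {ω | a < X ω} ≤ c := by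
  obtain ⟨u, hu_anti, hu_gt, hu_lim⟩ := exists_seq_strictAnti_tendsto a
  have hunion : {ω | a < X ω} = ⋃ n, {ω | u n < X ω} := by
    ext ω
    simp only [Set.mem_ofPred_eq, Set.mem_iUnion]
    exact ⟨fun hω => (hu_lim.eventually_lt_const hω).exists, fun ⟨n, hn⟩ => (hu_gt n).trans hn⟩
  have hmono : Monotone fun n => {ω | u n < X ω} :=
    fun _ _ hmn _ hω => (hu_anti.antitone hmn).trans_lt hω
  rw [hunion, hmono.measure_iUnion]
  exact iSup_le fun n => h _ (hu_gt n)

/-- Weak-type lemma: if `x P(X > x) ≤ E[Y 1_{X ≥ x}]` for all `x > 0`, then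
`P(X > 2t) ≤ ∫_1^∞ P(Y > s t) ds` for all `t > 0`. -/
theorem tail_bound_of_weak_type
    {Ω : Type*} [MeasurableSpace Ω] (μ : Measure Ω) [IsProbabilityMeasure μ]
    (X Y : Ω → ℝ) (hX : Measurable X) (hY : Measurable Y)
    (hXpos : ∀ ω, 0 ≤ X ω) (hYpos : ∀ ω, 0 ≤ Y ω)
    (hweak : ∀ x : ℝ, 0 < x →
      ENNReal.ofReal x * μ {ω | x < X ω} ≤ ∫⁻ ω in {ω | x ≤ X ω}, ENNReal.ofReal (Y ω) ∂μ)
    (t : ℝ) (ht : 0 < t) :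
    μ {ω | 2 * t < X ω} ≤ ∫⁻ s in Set.Ioi (1 : ℝ), μ {ω | s * t < Y ω} := by
  have ht_ne : ENNReal.ofReal t ≠ 0 := by simpa using ht
  have hexcess := lintegral_ofReal_sub_eq_lintegral_Ioi_meas_lt μ (hY.div_const t) 1
  simp only [lt_div_iff₀ ht] at hexcess
  rw [← hexcess]
  set I := ∫⁻ ω, ENNReal.ofReal (Y ω / t - 1) ∂μ
  have hpoint : ∀ ω, ENNReal.ofReal (Y ω) ≤
      ENNReal.ofReal t * (1 + ENNReal.ofReal (Y ω / t - 1)) := by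
    intro ω
    calc ENNReal.ofReal (Y ω) = ENNReal.ofReal (t * (1 + (Y ω / t - 1))) := by
          congr 1
          field_simp
          ring
      _ = ENNReal.ofReal t * ENNReal.ofReal (1 + (Y ω / t - 1)) := ENNReal.ofReal_mul ht.le
      _ ≤ _ := by
          gcongr
          simpa using ENNReal.ofReal_add_le (p := 1) (q := Y ω / t - 1)
  have hdouble : ∀ x, 2 * t < x →
      2 * μ {ω | x < X ω} ≤ μ {ω | 2 * t < X ω} + I := by
    intro x hx
    rw [← ENNReal.mul_le_mul_iff_right ht_ne ENNReal.ofReal_ne_top]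
    calc ENNReal.ofReal t * (2 * μ {ω | x < X ω})
        = ENNReal.ofReal (2 * t) * μ {ω | x < X ω} := by
          rw [ENNReal.ofReal_mul zero_le_two, ENNReal.ofReal_ofNat]
          ring
      _ ≤ ENNReal.ofReal x * μ {ω | x < X ω} := by gcongr
      _ ≤ ∫⁻ ω in {ω | x ≤ X ω}, ENNReal.ofReal (Y ω) ∂μ := hweak x (by linarith)
      _ ≤ ∫⁻ ω in {ω | x ≤ X ω}, ENNReal.ofReal t * (1 + ENNReal.ofReal (Y ω / t - 1)) ∂μ :=
          lintegral_mono hpoint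
      _ = ENNReal.ofReal t * (μ {ω | x ≤ X ω} +
            ∫⁻ ω in {ω | x ≤ X ω}, ENNReal.ofReal (Y ω / t - 1) ∂μ) := by
          rw [lintegral_const_mul' _ _ ENNReal.ofReal_ne_top,
            lintegral_add_left measurable_const, setLIntegral_one]
      _ ≤ _ := by
          gcongr
          exact setLIntegral_le_lintegral _ _
  have hhalf : μ {ω | 2 * t < X ω} ≤ (μ {ω | 2 * t < X ω} + I) / 2 :=
    meas_lt_le_of_forall_gt μ X (2 * t) fun x hx => by
      rw [ENNReal.le_div_iff_mul_le (by simp) (by simp), mul_comm]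
      exact hdouble x hx
  rw [ENNReal.le_div_iff_mul_le (by simp) (by simp), mul_two] at hhalf
  exact (ENNReal.add_le_add_iff_left (measure_ne_top μ _)).1 hhalf
end

section
/- Let (Y_i)_{i∈ℤ^d} be a strictly stationary random field of nonnegative random variables. Then for all y > 0, P( sup_{n∈ℕ^d} (1/|n|) Σ_{1 ≼ i ≼ n} Y_i > y ) ≤ ∫_1^∞ P( Y_1 > y·u·2^{−d} ) (log u)^{d−1} du. -/
open MeasureTheory ProbabilityTheory ENNReal

/-- The ergodic maximal function of `g` along the orbits of `T`; the term `n = 0` vanishes. -/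
noncomputable def ergodicMax {X : Type*} (T : X → X) (g : X → ℝ≥0∞) (x : X) : ℝ≥0∞ :=
  ⨆ n : ℕ, (n : ℝ≥0∞)⁻¹ * ∑ j ∈ Finset.range n, g (T^[j] x)

theorem measurable_ergodicMax {X : Type*} [MeasurableSpace X] {T : X → X} (hT : Measurable T)
    {g : X → ℝ≥0∞} (hg : Measurable g) : Measurable (ergodicMax T g) := by
  refine Measurable.iSup fun n => Measurable.const_mul ?_ _
  exact Finset.measurable_sum _ fun j _ => hg.comp (hT.iterate j)

open Classical in
/-- Discrete rising sun inequality. -/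
theorem sum_ite_le_sum_range (c : ℝ≥0∞) (N : ℕ) (L : ℕ) (a : ℕ → ℝ≥0∞) :
    ∑ i ∈ Finset.range L,
      (if ∃ n, 0 < n ∧ n ≤ N ∧ n * c ≤ ∑ j ∈ Finset.range n, a (i + j) then c else 0) ≤
      ∑ j ∈ Finset.range (L + N), a j := by
  induction L using Nat.strong_induction_on generalizing a with
  | _ L ih =>
    rcases Nat.eq_zero_or_pos L with rfl | hL
    · simp
    by_cases h0 : ∃ n, 0 < n ∧ n ≤ N ∧ n * c ≤ ∑ j ∈ Finset.range n, a (0 + j)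
    · obtain ⟨n, hn, hnN, hs⟩ := h0
      simp only [zero_add] at hs
      rcases le_total L n with hLn | hnL
      · calc _ ≤ ∑ i ∈ Finset.range L, c := Finset.sum_le_sum fun i _ => by split_ifs <;> simp
          _ ≤ n * c := by simp; gcongr
          _ ≤ _ := hs
          _ ≤ _ := Finset.sum_le_sum_of_subset (by simp; omega)
      · obtain ⟨K, rfl⟩ := Nat.exists_eq_add_of_le hnL
        rw [Finset.sum_range_add, add_assoc, Finset.sum_range_add]
        refine add_le_add (le_trans ?_ hs) ?_
        · calc _ ≤ ∑ i ∈ Finset.range n, c := Finset.sum_le_sum fun i _ => by split_ifs <;> simp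
            _ ≤ n * c := by simp
        · have := ih K (by omega) (fun j => a (n + j))
          simpa only [add_assoc] using this
    · obtain ⟨K, rfl⟩ := Nat.exists_eq_add_of_le' hL
      rw [Finset.sum_range_succ', if_neg h0, add_zero, add_right_comm, Finset.sum_range_succ']
      refine le_trans ?_ le_self_add
      have := ih K (by omega) (fun j => a (j + 1))
      simpa only [add_right_comm] using this

theorem le_of_forall_natCast_mul_le {p e : ℝ≥0∞} (N : ℕ)
    (h : ∀ L : ℕ, (L : ℝ≥0∞) * p ≤ ((L + N : ℕ) : ℝ≥0∞) * e) : p ≤ e := by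
  rcases eq_or_ne e ∞ with rfl | he
  · simp
  lift e to NNReal using he
  have hp : p ≠ ∞ := by
    rintro rfl
    have := h 1
    simp at this
    exact (ENNReal.mul_ne_top (by simp) (by simp)) this
  lift p to NNReal using hp
  norm_cast at h ⊢
  by_contra! hlt
  have hlt' : (0 : ℝ) < p - e := sub_pos.2 hlt
  obtain ⟨L, hL⟩ := exists_nat_gt ((N : ℝ) * e / (p - e))
  rw [div_lt_iff₀ hlt'] at hL
  have := h L
  rw [← NNReal.coe_le_coe] at this
  push_cast at this
  linarith

/-- Weak type `(1, 1)` inequality for the ergodic maximal function. -/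
theorem mul_measure_lt_ergodicMax_le {X : Type*} [MeasurableSpace X] {ν : Measure X} {T : X → X}
    (hT : MeasurePreserving T ν ν) {g : X → ℝ≥0∞} (hg : Measurable g) (c : ℝ≥0∞) :
    c * ν {x | c < ergodicMax T g x} ≤ ∫⁻ x, g x ∂ν := by
  classical
  let A (N : ℕ) : Set X := {x | ∃ n ∈ Finset.Icc 1 N, c < (n : ℝ≥0∞)⁻¹ *
    ∑ j ∈ Finset.range n, g (T^[j] x)}
  have hA (N) : MeasurableSet (A N) := by
    have : A N = ⋃ n ∈ Finset.Icc 1 N, {x | c < (n : ℝ≥0∞)⁻¹ *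
        ∑ j ∈ Finset.range n, g (T^[j] x)} := by ext; simp [A]
    rw [this]
    refine Finset.measurableSet_biUnion _ fun n _ => measurableSet_lt measurable_const ?_
    exact (Finset.measurable_sum _ fun j _ => hg.comp (hT.measurable.iterate j)).const_mul _
  have hmono : Monotone A := fun N M hNM x ⟨n, hn, hx⟩ =>
    ⟨n, by simp only [Finset.mem_Icc] at hn ⊢; omega, hx⟩
  have hunion : {x | c < ergodicMax T g x} = ⋃ N, A N := by
    ext x
    simp only [ergodicMax, Set.mem_ofPred_eq, lt_iSup_iff, Set.mem_iUnion, A, Finset.mem_Icc]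
    constructor
    · rintro ⟨n, hn⟩
      refine ⟨n, n, ⟨Nat.one_le_iff_ne_zero.2 ?_, le_rfl⟩, hn⟩
      rintro rfl
      simp at hn
    · rintro ⟨N, n, -, hn⟩
      exact ⟨n, hn⟩
  rw [hunion, hmono.measure_iUnion, ENNReal.mul_iSup]
  refine iSup_le fun N => le_of_forall_natCast_mul_le N fun L => ?_
  calc (L : ℝ≥0∞) * (c * ν (A N))
      = ∑ i ∈ Finset.range L, ∫⁻ x, (A N).indicator (fun _ => c) (T^[i] x) ∂ν := by
        have (i : ℕ) : ∫⁻ x, (A N).indicator (fun _ => c) (T^[i] x) ∂ν = c * ν (A N) := by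
          rw [(hT.iterate i).lintegral_comp (measurable_const.indicator (hA N)),
            lintegral_indicator_const (hA N)]
        simp [this]
    _ = ∫⁻ x, ∑ i ∈ Finset.range L, (A N).indicator (fun _ => c) (T^[i] x) ∂ν := by
        rw [lintegral_finsetSum]
        exact fun i _ => (measurable_const.indicator (hA N)).comp (hT.measurable.iterate i)
    _ ≤ ∫⁻ x, ∑ j ∈ Finset.range (L + N), g (T^[j] x) ∂ν := by
        refine lintegral_mono fun x => le_trans ?_
          (sum_ite_le_sum_range c N L fun j => g (T^[j] x))
        refine Finset.sum_le_sum fun i _ => ?_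
        by_cases hi : T^[i] x ∈ A N
        · rw [Set.indicator_of_mem hi, if_pos]
          obtain ⟨n, hn, hlt⟩ := hi
          rw [Finset.mem_Icc] at hn
          refine ⟨n, hn.1, hn.2, ?_⟩
          rw [mul_comm, ← div_eq_mul_inv, ENNReal.lt_div_iff_mul_lt (.inl (by simp; omega)) (by simp),
            mul_comm] at hlt
          simp only [← Function.iterate_add_apply] at hlt
          simpa only [add_comm i] using hlt.le
        · simp [Set.indicator_of_notMem hi]
    _ = ((L + N : ℕ) : ℝ≥0∞) * ∫⁻ x, g x ∂ν := by
        rw [lintegral_finsetSum _ fun j _ => by exact hg.comp (hT.measurable.iterate j)]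
        simp [(hT.iterate _).lintegral_comp hg]

theorem ergodicMax_le_ergodicMax_tsub_add {X : Type*} (T : X → X) (g : X → ℝ≥0∞) (c : ℝ≥0∞)
    (x : X) : ergodicMax T g x ≤ ergodicMax T (fun z => g z - c) x + c := by
  refine iSup_le fun n => ?_
  calc (n : ℝ≥0∞)⁻¹ * ∑ j ∈ Finset.range n, g (T^[j] x)
      ≤ (n : ℝ≥0∞)⁻¹ * ∑ j ∈ Finset.range n, ((g (T^[j] x) - c) + c) := by
        gcongr
        exact le_tsub_add
    _ = (n : ℝ≥0∞)⁻¹ * ∑ j ∈ Finset.range n, (g (T^[j] x) - c) + (n : ℝ≥0∞)⁻¹ * n * c := by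
        rw [Finset.sum_add_distrib, mul_add, mul_assoc]
        simp
    _ ≤ _ := by
        refine add_le_add (le_iSup (fun n : ℕ => (n : ℝ≥0∞)⁻¹ *
          ∑ j ∈ Finset.range n, (g (T^[j] x) - c)) n) ?_
        exact mul_le_of_le_one_left' (ENNReal.inv_mul_le_one _)

theorem tsub_ofReal_eq_mul_volume {c : ℝ} (hc : 0 < c) (t : ℝ≥0∞) :
    t - ENNReal.ofReal c =
      ENNReal.ofReal c * volume.restrict (Set.Ioi 1) {u : ℝ | ENNReal.ofReal (c * u) < t} := by
  have hmeas : MeasurableSet {u : ℝ | ENNReal.ofReal (c * u) < t} :=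
    measurableSet_lt (by fun_prop) measurable_const
  rw [Measure.restrict_apply hmeas]
  induction t with
  | top => simp [Set.inter_comm, hc]
  | coe t =>
    have : {u : ℝ | ENNReal.ofReal (c * u) < t} ∩ Set.Ioi 1 = Set.Ioo 1 (t / c) := by
      ext u
      simp only [Set.mem_inter_iff, Set.mem_ofPred_eq, Set.mem_Ioi, Set.mem_Ioo, lt_div_iff₀ hc]
      rw [and_comm]
      refine and_congr_right fun hu => ?_
      rw [← ENNReal.ofReal_coe_nnreal, ENNReal.ofReal_lt_ofReal_iff_of_nonneg (by positivity),
        mul_comm]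
    rw [this, Real.volume_Ioo, ← ENNReal.ofReal_mul hc.le, ← ENNReal.ofReal_coe_nnreal,
      ← ENNReal.ofReal_sub _ hc.le]
    congr 1
    field_simp

theorem measure_lt_ergodicMax_le_lintegral {X : Type*} [MeasurableSpace X] {ν : Measure X}
    [SFinite ν] {T : X → X} (hT : MeasurePreserving T ν ν) {g : X → ℝ≥0∞} (hg : Measurable g)
    {y : ℝ} (hy : 0 < y) :
    ν {x | ENNReal.ofReal y < ergodicMax T g x} ≤
      ∫⁻ u in Set.Ioi (1 : ℝ), ν {x | ENNReal.ofReal (y * u / 2) < g x} := by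
  have hc : 0 < y / 2 := half_pos hy
  have hc0 : ENNReal.ofReal (y / 2) ≠ 0 := by simpa using hc
  have hsub : {x | ENNReal.ofReal y < ergodicMax T g x} ⊆
      {x | ENNReal.ofReal (y / 2) <
        ergodicMax T (fun z => g z - ENNReal.ofReal (y / 2)) x} := by
    intro x hx
    have h := lt_of_lt_of_le (show _ < _ from hx)
      (ergodicMax_le_ergodicMax_tsub_add T g (ENNReal.ofReal (y / 2)) x)
    rw [show y = y / 2 + y / 2 by ring, ENNReal.ofReal_add hc.le hc.le] at h
    simp only [add_halves] at h
    exact lt_of_add_lt_add_right h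
  refine (measure_mono hsub).trans ?_
  rw [← ENNReal.mul_le_mul_iff_right hc0 ENNReal.ofReal_ne_top]
  refine (mul_measure_lt_ergodicMax_le hT (hg.sub_const _) _).trans_eq ?_
  have hS : MeasurableSet {p : X × ℝ | ENNReal.ofReal (y * p.2 / 2) < g p.1} :=
    measurableSet_lt (by fun_prop) (by fun_prop)
  have hprod := (Measure.prod_apply (μ := ν) (ν := volume.restrict (Set.Ioi (1 : ℝ))) hS).symm.trans
    (Measure.prod_apply_symm hS)
  simp only [Set.preimage_ofPred_eq] at hprod
  rw [← hprod, ← lintegral_const_mul' _ _ ENNReal.ofReal_ne_top]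
  refine lintegral_congr fun x => ?_
  rw [tsub_ofReal_eq_mul_volume hc]
  simp only [mul_div_right_comm]

theorem lintegral_Ioi_one_comp_mul_right (F : ℝ → ℝ≥0∞) {v : ℝ} (hv : 0 < v) :
    ∫⁻ u in Set.Ioi (1 : ℝ), F (u * v) = ENNReal.ofReal v⁻¹ * ∫⁻ w in Set.Ioi v, F w := by
  have h := lintegral_image_eq_lintegral_abs_deriv_mul (s := Set.Ioi (1 : ℝ)) (f := fun u => u * v)
    (f' := fun _ => v) measurableSet_Ioi
    (fun u _ => by simpa using ((hasDerivAt_id u).mul_const v).hasDerivWithinAt)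
    ((mul_left_injective₀ hv.ne').injOn) F
  have himage : Set.image (fun u => u * v) (Set.Ioi 1) = Set.Ioi v := by
    ext w
    refine ⟨fun ⟨u, hu, huw⟩ => huw ▸ lt_mul_of_one_lt_left hv hu, fun hw => ?_⟩
    exact ⟨w / v, (one_lt_div hv).2 hw, div_mul_cancel₀ w hv.ne'⟩
  rw [himage, abs_of_pos hv,
    lintegral_const_mul' _ _ ENNReal.ofReal_ne_top] at h
  rw [h, ← mul_assoc, ← ENNReal.ofReal_mul (by positivity), inv_mul_cancel₀ hv.ne']
  simp

theorem lintegral_Ioc_one_inv {w : ℝ} (hw : 1 ≤ w) :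
    ∫⁻ v in Set.Ioc 1 w, ENNReal.ofReal v⁻¹ = ENNReal.ofReal (Real.log w) := by
  have hint : IntervalIntegrable (fun v : ℝ => v⁻¹) volume 1 w := by
    refine intervalIntegral.intervalIntegrable_inv (fun x hx => ?_) continuousOn_id
    rw [Set.uIcc_of_le hw] at hx
    exact (zero_lt_one.trans_le hx.1).ne'
  rw [← ofReal_integral_eq_lintegral_ofReal
    ((intervalIntegrable_iff_integrableOn_Ioc_of_le hw).1 hint),
    ← intervalIntegral.integral_of_le hw, integral_inv_of_pos one_pos (by linarith), div_one]
  filter_upwards [ae_restrict_mem measurableSet_Ioc] with v hv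
  exact inv_nonneg.2 (by linarith [hv.1])

theorem lintegral_lintegral_log_pow_mul_le {F : ℝ → ℝ≥0∞} (hF : Measurable F) (k : ℕ) :
    ∫⁻ u in Set.Ioi (1 : ℝ), ∫⁻ v in Set.Ioi (1 : ℝ), ENNReal.ofReal (Real.log v ^ k) * F (u * v) ≤
      ∫⁻ w in Set.Ioi (1 : ℝ), ENNReal.ofReal (Real.log w ^ (k + 1)) * F w := by
  have hlog : Measurable fun v : ℝ => ENNReal.ofReal (Real.log v ^ k) :=
    (Real.measurable_log.pow_const k).ennreal_ofReal
  rw [lintegral_lintegral_swap (by fun_prop)]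
  calc ∫⁻ v in Set.Ioi (1 : ℝ), ∫⁻ u in Set.Ioi (1 : ℝ), ENNReal.ofReal (Real.log v ^ k) * F (u * v)
      = ∫⁻ v in Set.Ioi (1 : ℝ), ∫⁻ w in Set.Ioi (1 : ℝ),
        {p : ℝ × ℝ | p.1 < p.2}.indicator
          (fun p => ENNReal.ofReal (Real.log p.1 ^ k) * ENNReal.ofReal p.1⁻¹ * F p.2) (v, w) := by
        refine setLIntegral_congr_fun measurableSet_Ioi fun v (hv : 1 < v) => ?_
        rw [lintegral_const_mul' _ _ ENNReal.ofReal_ne_top,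
          lintegral_Ioi_one_comp_mul_right F (by linarith), ← mul_assoc,
          ← lintegral_const_mul' _ _ (by finiteness)]
        rw [← Set.inter_eq_self_of_subset_left (Set.Ioi_subset_Ioi hv.le),
          ← Measure.restrict_restrict measurableSet_Ioi, ← lintegral_indicator measurableSet_Ioi]
        rfl
    _ = ∫⁻ w in Set.Ioi (1 : ℝ), ∫⁻ v in Set.Ioi (1 : ℝ),
        {p : ℝ × ℝ | p.1 < p.2}.indicator
          (fun p => ENNReal.ofReal (Real.log p.1 ^ k) * ENNReal.ofReal p.1⁻¹ * F p.2) (v, w) := by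
        refine lintegral_lintegral_swap (Measurable.aemeasurable ?_)
        refine Measurable.indicator ?_ (measurableSet_lt measurable_fst measurable_snd)
        fun_prop
    _ ≤ _ := by
        refine setLIntegral_mono' measurableSet_Ioi fun w (hw : 1 < w) => ?_
        calc _ ≤ ∫⁻ v in Set.Ioi (1 : ℝ), (Set.Ioc 1 w).indicator (fun v =>
              ENNReal.ofReal (Real.log w ^ k) * F w * ENNReal.ofReal v⁻¹) v := by
              refine setLIntegral_mono' measurableSet_Ioi fun v (hv : 1 < v) => ?_
              by_cases hvw : v < w
              · rw [Set.indicator_of_mem (show (v, w) ∈ {p : ℝ × ℝ | p.1 < p.2} from hvw),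
                  Set.indicator_of_mem (show v ∈ Set.Ioc 1 w from ⟨hv, hvw.le⟩), mul_right_comm]
                have := Real.log_nonneg hv.le
                have := Real.log_le_log (by linarith) hvw.le
                gcongr
              · rw [Set.indicator_of_notMem (show (v, w) ∉ {p : ℝ × ℝ | p.1 < p.2} from hvw)]
                exact zero_le
          _ = _ := by
              rw [lintegral_indicator measurableSet_Ioc, Measure.restrict_restrict measurableSet_Ioc,
                Set.inter_eq_self_of_subset_left Set.Ioc_subset_Ioi_self,
                lintegral_const_mul _ (by fun_prop), lintegral_Ioc_one_inv hw.le, pow_succ,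
                ENNReal.ofReal_mul (pow_nonneg (Real.log_nonneg hw.le) k), mul_right_comm]

/-- The composition of the ergodic maximal operators of finitely many transformations. -/
noncomputable def iteratedErgodicMax {X : Type*} :
    (m : ℕ) → (Fin m → X → X) → (X → ℝ≥0∞) → X → ℝ≥0∞
  | 0, _, g => g
  | m + 1, T, g => ergodicMax (T 0) (iteratedErgodicMax m (fun q => T q.succ) g)

theorem measurable_iteratedErgodicMax {X : Type*} [MeasurableSpace X] {m : ℕ} {T : Fin m → X → X}
    (hT : ∀ q, Measurable (T q)) {g : X → ℝ≥0∞} (hg : Measurable g) :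
    Measurable (iteratedErgodicMax m T g) := by
  induction m with
  | zero => exact hg
  | succ m ih => exact measurable_ergodicMax (hT 0) (ih fun q => hT q.succ)

theorem measure_lt_iteratedErgodicMax_le_lintegral {X : Type*} [MeasurableSpace X] {ν : Measure X}
    [SFinite ν] {m : ℕ} {T : Fin (m + 1) → X → X} (hT : ∀ q, MeasurePreserving (T q) ν ν)
    {g : X → ℝ≥0∞} (hg : Measurable g) {y : ℝ} (hy : 0 < y) :
    ν {x | ENNReal.ofReal y < iteratedErgodicMax (m + 1) T g x} ≤
      ∫⁻ u in Set.Ioi (1 : ℝ), ENNReal.ofReal (Real.log u ^ m) *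
        ν {x | ENNReal.ofReal (y * u / 2 ^ (m + 1)) < g x} := by
  induction m generalizing y with
  | zero => simpa [iteratedErgodicMax] using measure_lt_ergodicMax_le_lintegral (hT 0) hg hy
  | succ m ih =>
    have hanti : Antitone fun w : ℝ => ν {x | ENNReal.ofReal (y * w / 2 ^ (m + 2)) < g x} :=
      fun v w hvw => measure_mono fun x hx =>
        (ENNReal.ofReal_le_ofReal (by gcongr)).trans_lt (show _ < _ from hx)
    calc ν {x | ENNReal.ofReal y < iteratedErgodicMax (m + 2) T g x}
        ≤ ∫⁻ u in Set.Ioi (1 : ℝ), ν {x | ENNReal.ofReal (y * u / 2) <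
            iteratedErgodicMax (m + 1) (fun q => T q.succ) g x} :=
          measure_lt_ergodicMax_le_lintegral (hT 0)
            (measurable_iteratedErgodicMax (fun q => (hT q.succ).measurable) hg) hy
      _ ≤ ∫⁻ u in Set.Ioi (1 : ℝ), ∫⁻ v in Set.Ioi (1 : ℝ), ENNReal.ofReal (Real.log v ^ m) *
            ν {x | ENNReal.ofReal (y * (u * v) / 2 ^ (m + 2)) < g x} := by
          refine setLIntegral_mono' measurableSet_Ioi fun u (hu : 1 < u) => ?_
          refine (ih (fun q => hT q.succ) (y := y * u / 2) (by positivity)).trans_eq ?_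
          refine lintegral_congr fun v => ?_
          rw [show y * u / 2 * v / 2 ^ (m + 1) = y * (u * v) / 2 ^ (m + 2) by ring]
      _ ≤ _ := lintegral_lintegral_log_pow_mul_le hanti.measurable m

theorem inv_prod_mul_sum_le_iteratedErgodicMax {X ι : Type*} [AddCommMonoid ι] {S : ι → X → X}
    (hS : ∀ k l x, S k (S l x) = S (k + l) x) (hS₀ : ∀ x, S 0 x = x)
    {m : ℕ} (e : Fin m → ι) (g : X → ℝ≥0∞) (n : Fin m → ℕ) (x : X) :
    (∏ q, (n q : ℝ≥0∞)⁻¹) * ∑ i : (∀ q, Fin (n q)), g (S (∑ q, (i q : ℕ) • e q) x) ≤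
      iteratedErgodicMax m (fun q => S (e q)) g x := by
  induction m generalizing x with
  | zero => simp [iteratedErgodicMax, hS₀]
  | succ m ih =>
    have hiter (j : ℕ) (x : X) : (S (e 0))^[j] x = S (j • e 0) x := by
      induction j with
      | zero => simp [hS₀]
      | succ j ihj => rw [Function.iterate_succ_apply', ihj, hS, succ_nsmul']
    calc _ = (n 0 : ℝ≥0∞)⁻¹ * ∑ j ∈ Finset.range (n 0), (∏ q : Fin m, (n q.succ : ℝ≥0∞)⁻¹) *
          ∑ i : (∀ q : Fin m, Fin (n q.succ)),
            g (S (∑ q, (i q : ℕ) • e q.succ) ((S (e 0))^[j] x)) := by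
          rw [Fin.prod_univ_succ, mul_assoc, ← Finset.mul_sum,
            ← (Fin.consEquiv fun q => Fin (n q)).sum_comp, Fintype.sum_prod_type,
            ← Fin.sum_univ_eq_sum_range (fun j => ∑ i : (∀ q : Fin m, Fin (n q.succ)),
              g (S (∑ q, (i q : ℕ) • e q.succ) ((S (e 0))^[j] x)))]
          simp [Fin.consEquiv, Fin.sum_univ_succ, hiter, hS, add_comm]
      _ ≤ (n 0 : ℝ≥0∞)⁻¹ * ∑ j ∈ Finset.range (n 0),
          iteratedErgodicMax m (fun q => S (e q.succ)) g ((S (e 0))^[j] x) := by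
          gcongr
          exact ih _ _ _
      _ ≤ _ := le_iSup (fun n : ℕ => (n : ℝ≥0∞)⁻¹ * ∑ j ∈ Finset.range n,
          iteratedErgodicMax m (fun q => S (e q.succ)) g ((S (e 0))^[j] x)) (n 0)

theorem sum_Icc_one_eq_sum_fin {M : Type*} [AddCommMonoid M] {d : ℕ} (f : (Fin d → ℤ) → M)
    (n : Fin d → ℕ) :
    ∑ i ∈ Finset.Icc 1 (fun q => (n q : ℤ)), f i =
      ∑ i : (∀ q, Fin (n q)), f (1 + ∑ q, (i q : ℕ) • Pi.single q 1) := by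
  have hcoord (i : ∀ q, Fin (n q)) :
      1 + ∑ q, (i q : ℕ) • (Pi.single q 1 : Fin d → ℤ) = fun q => 1 + ((i q : ℕ) : ℤ) := by
    ext q
    simp [Finset.sum_apply, Pi.single_apply]
  simp only [hcoord]
  symm
  refine Finset.sum_bij (fun i _ q => 1 + ((i q : ℕ) : ℤ)) ?_ ?_ ?_ fun _ _ => rfl
  · intro i _
    simp only [Finset.mem_Icc, Pi.le_def, Pi.one_apply]
    exact ⟨fun q => by omega, fun q => by have := (i q).2; omega⟩
  · intro i _ j _ hij
    ext q
    have := congrFun hij q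
    simpa using this
  · intro b hb
    simp only [Finset.mem_Icc, Pi.le_def, Pi.one_apply] at hb
    refine ⟨fun q => ⟨(b q - 1).toNat, by have := hb.1 q; have := hb.2 q; omega⟩,
      Finset.mem_univ _, ?_⟩
    ext q
    have := hb.1 q
    simp only
    omega

/-- Maximal inequality for strictly stationary nonnegative random fields:
`P( sup_{n ∈ ℕ^d} |n|⁻¹ Σ_{1 ≼ i ≼ n} Y_i > y ) ≤ ∫_1^∞ P(Y_1 > y u 2^{-d}) (log u)^{d-1} du`. -/
theorem maximal_inequality_stationary_field
    (d : ℕ) (hd : 1 ≤ d)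
    {Ω : Type*} [MeasurableSpace Ω] (μ : Measure Ω) [IsProbabilityMeasure μ]
    (Y : (Fin d → ℤ) → Ω → ℝ)
    (hmeas : ∀ i, Measurable (Y i))
    (hpos : ∀ i ω, 0 ≤ Y i ω)
    (hstat : ∀ k : Fin d → ℤ,
      IdentDistrib (fun ω => fun i : Fin d → ℤ => Y (i + k) ω)
        (fun ω => fun i : Fin d → ℤ => Y i ω) μ μ)
    (y : ℝ) (hy : 0 < y) :
    μ {ω | ENNReal.ofReal y <
        ⨆ n : {n : Fin d → ℤ // ∀ q, 1 ≤ n q},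
          ENNReal.ofReal ((∏ q, (n.1 q : ℝ))⁻¹ * ∑ i ∈ Finset.Icc 1 n.1, Y i ω)} ≤
      ∫⁻ u in Set.Ioi (1 : ℝ),
        ENNReal.ofReal ((Real.log u) ^ (d - 1)) * μ {ω | y * u / 2 ^ d < Y 1 ω} := by
  obtain ⟨m, rfl⟩ := Nat.exists_eq_add_of_le' hd
  let X := (Fin (m + 1) → ℤ) → ℝ
  let Φ : Ω → X := fun ω i => Y i ω
  have hΦ : Measurable Φ := measurable_pi_lambda _ hmeas
  let S : (Fin (m + 1) → ℤ) → X → X := fun k x i => x (i + k)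
  have hSmeas (k) : Measurable (S k) := measurable_pi_lambda _ fun i => measurable_pi_apply _
  have hS (k) : MeasurePreserving (S k) (μ.map Φ) (μ.map Φ) :=
    ⟨hSmeas k, (Measure.map_map (hSmeas k) hΦ).trans (hstat k).map_eq⟩
  let g : X → ℝ≥0∞ := fun x => ENNReal.ofReal (x 1)
  have hg : Measurable g := (measurable_pi_apply _).ennreal_ofReal
  let e : Fin (m + 1) → Fin (m + 1) → ℤ := fun q => Pi.single q 1
  let G := iteratedErgodicMax (m + 1) (fun q => S (e q)) g
  have hG : Measurable G := measurable_iteratedErgodicMax (fun q => hSmeas _) hg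
  have := Measure.isProbabilityMeasure_map (μ := μ) hΦ.aemeasurable
  have hsup (ω : Ω) : ⨆ n : {n : Fin (m + 1) → ℤ // ∀ q, 1 ≤ n q},
      ENNReal.ofReal ((∏ q, (n.1 q : ℝ))⁻¹ * ∑ i ∈ Finset.Icc 1 n.1, Y i ω) ≤ G (Φ ω) := by
    refine iSup_le fun ⟨n, hn⟩ => ?_
    lift n to Fin (m + 1) → ℕ using fun q => zero_le_one.trans (hn q)
    refine le_trans (le_of_eq ?_) (inv_prod_mul_sum_le_iteratedErgodicMax (S := S)
      (fun k l x => funext fun i => by simp only [S, add_assoc])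
      (fun x => funext fun i => by simp only [S, add_zero]) e g n (Φ ω))
    have hn' (q) : (0 : ℝ) < n q := by
      have : (1 : ℤ) ≤ n q := hn q
      exact_mod_cast this
    rw [← Finset.prod_inv_distrib, ENNReal.ofReal_mul
      (Finset.prod_nonneg fun q _ => by positivity), ENNReal.ofReal_prod_of_nonneg
      (fun q _ => by positivity), ENNReal.ofReal_sum_of_nonneg (fun i _ => hpos i ω),
      sum_Icc_one_eq_sum_fin]
    congr 1
    refine Finset.prod_congr rfl fun q _ => ?_
    rw [Int.cast_natCast, ENNReal.ofReal_inv_of_pos (hn' q), ENNReal.ofReal_natCast]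
  calc _ ≤ μ {ω | ENNReal.ofReal y < G (Φ ω)} :=
        measure_mono fun ω hω => lt_of_lt_of_le (show _ < _ from hω) (hsup ω)
    _ = μ.map Φ {x | ENNReal.ofReal y < G x} :=
        (Measure.map_apply hΦ (measurableSet_lt measurable_const hG)).symm
    _ ≤ _ := measure_lt_iteratedErgodicMax_le_lintegral (fun q => hS _) hg hy
    _ = _ := by
        refine setLIntegral_congr_fun measurableSet_Ioi fun u (hu : 1 < u) => ?_
        simp only [add_tsub_cancel_right]
        rw [Measure.map_apply hΦ (measurableSet_lt measurable_const hg)]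
        congr 2
        ext ω
        exact ENNReal.ofReal_lt_ofReal_iff_of_nonneg (by positivity)
end

section
/- Let r ≥ 0 and let (d_k)_{k=1}^n be a martingale difference sequence with respect to a filtration (ℱ_k)_{k=0}^n. Then there exist constants C_r and K_r depending only on r such that: (i) ‖Σ_{k=1}^n d_k‖_{2,r} ≤ C_r ‖max_{1≤k≤n} |d_k|‖_{2,r} + C_r ( Σ_{k=1}^n ‖ E[d_k² | ℱ_{k−1}] ‖_{1,r} )^{1/2}; and (ii) ‖Σ_{k=1}^n d_k‖_{2,r}² ≤ K_r Σ_{k=1}^n ‖d_k‖_{2,r}². -/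
open MeasureTheory ProbabilityTheory ENNReal

noncomputable section

/-- The Young function `φ_{p,r}(x) = x^p (1 + log(1+x))^r`. -/
def phiYoung (p r x : ℝ) : ℝ := x ^ p * (1 + Real.log (1 + x)) ^ r

/-- The Luxemburg (Orlicz) norm associated with `φ_{p,r}`. -/
def orliczNorm {Ω : Type*} [MeasurableSpace Ω] (μ : Measure Ω) (p r : ℝ) (X : Ω → ℝ) : ℝ≥0∞ :=
  sInf {l : ℝ≥0∞ | 0 < l ∧ l < ⊤ ∧
    ∫⁻ ω, ENNReal.ofReal (phiYoung p r (|X ω| / l.toReal)) ∂μ ≤ 1}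

/-- The even smooth logarithmic weight `(1 + log (1 + x²))^r`. -/
def logWeight (r x : ℝ) : ℝ := (1 + Real.log (1 + x ^ 2)) ^ r

/-- A smooth even function equivalent to `φ_{2,r}`. -/
def smoothYoung (r x : ℝ) : ℝ := x ^ 2 * logWeight r x

/-- The derivative of `smoothYoung r`. -/
def smoothYoungDeriv (r x : ℝ) : ℝ :=
  2 * x * logWeight r x + x ^ 2 * (2 * r * (x / (1 + x ^ 2)) * logWeight (r - 1) x)

/-- The constant in the second order Taylor estimate for `smoothYoung r`. -/
def taylorConst (r : ℝ) : ℝ := (2 + 14 * r + 4 * r * |r - 1|) * 3 ^ r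

lemma one_le_one_add_log (x : ℝ) : 1 ≤ 1 + Real.log (1 + x ^ 2) := by
  have := Real.log_nonneg (x := 1 + x ^ 2) (by nlinarith [sq_nonneg x])
  linarith

lemma logWeight_pos (r x : ℝ) : 0 < logWeight r x :=
  Real.rpow_pos_of_pos (by linarith [one_le_one_add_log x]) r

lemma one_le_logWeight {r : ℝ} (hr : 0 ≤ r) (x : ℝ) : 1 ≤ logWeight r x :=
  Real.one_le_rpow (one_le_one_add_log x) hr

lemma logWeight_le_of_abs_le {r x y : ℝ} (hr : 0 ≤ r) (h : |x| ≤ |y|) :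
    logWeight r x ≤ logWeight r y := by
  have h2 : x ^ 2 ≤ y ^ 2 := sq_le_sq.mpr h
  have := Real.log_le_log (x := 1 + x ^ 2) (y := 1 + y ^ 2) (by positivity) (by linarith)
  exact Real.rpow_le_rpow (by linarith [one_le_one_add_log x]) (by linarith) hr

lemma logWeight_mono_exponent {r s : ℝ} (h : r ≤ s) (x : ℝ) : logWeight r x ≤ logWeight s x :=
  Real.rpow_le_rpow_of_exponent_le (one_le_one_add_log x) h

lemma hasDerivAt_logWeight (r x : ℝ) :
    HasDerivAt (logWeight r) (2 * r * (x / (1 + x ^ 2)) * logWeight (r - 1) x) x := by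
  have hp : (1 + x ^ 2) ≠ 0 := by positivity
  have h1 : HasDerivAt (fun x : ℝ => 1 + Real.log (1 + x ^ 2)) (2 * x / (1 + x ^ 2)) x := by
    have := (((hasDerivAt_pow 2 x).const_add 1).log hp).const_add 1
    simpa using this
  have h2 := h1.rpow_const (p := r) (Or.inl (by linarith [one_le_one_add_log x]))
  refine h2.congr_deriv ?_
  unfold logWeight
  ring

lemma continuous_logWeight (r : ℝ) : Continuous (logWeight r) :=
  continuous_iff_continuousAt.mpr fun x => (hasDerivAt_logWeight r x).continuousAt

lemma continuous_smoothYoung (r : ℝ) : Continuous (smoothYoung r) :=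
  (continuous_pow 2).mul (continuous_logWeight r)

lemma continuous_smoothYoungDeriv (r : ℝ) : Continuous (smoothYoungDeriv r) := by
  have h : ∀ x : ℝ, 1 + x ^ 2 ≠ 0 := fun x => by positivity
  have := continuous_logWeight r
  have := continuous_logWeight (r - 1)
  unfold smoothYoungDeriv
  fun_prop (disch := exact h _)

lemma hasDerivAt_smoothYoung (r x : ℝ) :
    HasDerivAt (smoothYoung r) (smoothYoungDeriv r x) x := by
  refine ((hasDerivAt_pow 2 x).mul (hasDerivAt_logWeight r x)).congr_deriv ?_
  unfold smoothYoungDeriv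
  simp

lemma smoothYoung_nonneg (r x : ℝ) : 0 ≤ smoothYoung r x :=
  mul_nonneg (sq_nonneg x) (logWeight_pos r x).le

lemma sq_le_smoothYoung {r : ℝ} (hr : 0 ≤ r) (x : ℝ) : x ^ 2 ≤ smoothYoung r x :=
  le_mul_of_one_le_right (sq_nonneg x) (one_le_logWeight hr x)

lemma smoothYoung_le_of_abs_le {r x y : ℝ} (hr : 0 ≤ r) (h : |x| ≤ |y|) :
    smoothYoung r x ≤ smoothYoung r y :=
  mul_le_mul (sq_le_sq.mpr h) (logWeight_le_of_abs_le hr h) (logWeight_pos r x).le (sq_nonneg y)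

lemma logWeight_mul_sq_le {r : ℝ} (hr : 0 ≤ r) (x y : ℝ) :
    logWeight r x * y ^ 2 ≤ smoothYoung r x + smoothYoung r y := by
  have hx := smoothYoung_nonneg r x
  have hy := smoothYoung_nonneg r y
  rcases le_total |x| |y| with h | h
  · have := mul_le_mul_of_nonneg_right (logWeight_le_of_abs_le hr h) (sq_nonneg y)
    unfold smoothYoung at *
    linarith
  · have := mul_le_mul_of_nonneg_left (sq_le_sq.mpr h) (logWeight_pos r x).le
    unfold smoothYoung at *
    linarith

lemma abs_smoothYoungDeriv_mul_le {r : ℝ} (hr : 0 ≤ r) (x y : ℝ) :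
    |smoothYoungDeriv r x * y| ≤ (2 + 2 * r) * (2 * smoothYoung r x + smoothYoung r y) := by
  have hL := logWeight_pos r x
  have hL' := logWeight_pos (r - 1) x
  have hLL : logWeight (r - 1) x ≤ logWeight r x := logWeight_mono_exponent (by linarith) x
  have hq0 : 0 ≤ x ^ 2 / (1 + x ^ 2) := by positivity
  have hq : x ^ 2 / (1 + x ^ 2) ≤ 1 := (div_le_one (by positivity)).mpr (by linarith)
  have h1 : smoothYoungDeriv r x * y
      = (2 * logWeight r x + 2 * r * (x ^ 2 / (1 + x ^ 2) * logWeight (r - 1) x)) * (x * y) := by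
    unfold smoothYoungDeriv
    ring
  have h2 : x ^ 2 / (1 + x ^ 2) * logWeight (r - 1) x ≤ logWeight r x :=
    (mul_le_of_le_one_left hL'.le hq).trans hLL
  have h3 : 0 ≤ x ^ 2 / (1 + x ^ 2) * logWeight (r - 1) x := mul_nonneg hq0 hL'.le
  rw [h1, abs_mul, abs_of_nonneg (by positivity)]
  have h4 : |x * y| ≤ x ^ 2 + y ^ 2 := by
    rw [abs_le]; constructor <;> nlinarith [sq_nonneg (x + y), sq_nonneg (x - y)]
  calc _ ≤ ((2 + 2 * r) * logWeight r x) * (x ^ 2 + y ^ 2) := by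
        refine mul_le_mul ?_ h4 (abs_nonneg _) (by positivity)
        nlinarith
    _ = (2 + 2 * r) * (smoothYoung r x + logWeight r x * y ^ 2) := by
        unfold smoothYoung; ring
    _ ≤ _ := by
        refine mul_le_mul_of_nonneg_left ?_ (by positivity)
        linarith [logWeight_mul_sq_le hr x y]

lemma exists_hasDerivAt_smoothYoungDeriv {r : ℝ} (hr : 0 ≤ r) (x : ℝ) :
    ∃ D, HasDerivAt (smoothYoungDeriv r) D x ∧
      |D| ≤ (2 + 14 * r + 4 * r * |r - 1|) * logWeight r x := by
  have hp : (1 + x ^ 2) ≠ 0 := by positivity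
  have hL := logWeight_pos r x
  have hL1 := logWeight_pos (r - 1) x
  have hL2 := logWeight_pos (r - 1 - 1) x
  have hLL1 : logWeight (r - 1) x ≤ logWeight r x := logWeight_mono_exponent (by linarith) x
  have hLL2 : logWeight (r - 1 - 1) x ≤ logWeight r x := logWeight_mono_exponent (by linarith) x
  have hq : HasDerivAt (fun x : ℝ => x / (1 + x ^ 2)) ((1 - x ^ 2) / (1 + x ^ 2) ^ 2) x := by
    refine ((hasDerivAt_id x).div ((hasDerivAt_pow 2 x).const_add 1) hp).congr_deriv ?_
    simp
    ring
  have hD := (((hasDerivAt_id x).const_mul 2).mul (hasDerivAt_logWeight r x)).add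
    ((hasDerivAt_pow 2 x).mul ((hq.const_mul (2 * r)).mul (hasDerivAt_logWeight (r - 1) x)))
  refine ⟨_, hD, ?_⟩
  have ht0 : 0 ≤ x ^ 2 / (1 + x ^ 2) := by positivity
  have ht : x ^ 2 / (1 + x ^ 2) ≤ 1 := (div_le_one (by positivity)).mpr (by linarith)
  have hu : |x ^ 2 * ((1 - x ^ 2) / (1 + x ^ 2) ^ 2)| ≤ 1 := by
    rw [← mul_div_assoc, abs_div, abs_of_pos (by positivity : 0 < (1 + x ^ 2) ^ 2),
      div_le_one (by positivity), abs_le]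
    constructor <;> nlinarith [sq_nonneg x, sq_nonneg (x ^ 2)]
  set t := x ^ 2 / (1 + x ^ 2) with ht'
  set u := x ^ 2 * ((1 - x ^ 2) / (1 + x ^ 2) ^ 2) with hu'
  calc _ = |2 * logWeight r x + (2 * r * (4 * t + u)) * logWeight (r - 1) x
          + 4 * r * (r - 1) * t ^ 2 * logWeight (r - 1 - 1) x| := by
        congr 1
        simp only [ht', hu', id, Pi.mul_apply]
        field_simp
        push_cast
        ring
    _ ≤ 2 * logWeight r x + (2 * r * 7) * logWeight r x
          + 4 * r * |r - 1| * logWeight r x := by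
        refine (abs_add_three _ _ _).trans ?_
        gcongr
        · rw [abs_of_pos (by positivity)]
        · rw [abs_mul, abs_of_pos hL1, abs_mul, abs_of_nonneg (by positivity : 0 ≤ 2 * r)]
          gcongr
          have := abs_le.mp hu
          rw [abs_le]
          constructor <;> linarith
        · rw [abs_mul, abs_of_pos hL2, abs_mul, abs_mul, abs_of_nonneg (by positivity : 0 ≤ 4 * r)]
          have : |t ^ 2| ≤ 1 := by
            rw [abs_of_nonneg (by positivity)]
            exact pow_le_one₀ ht0 ht
          calc _ ≤ 4 * r * |r - 1| * 1 * logWeight r x := by gcongr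
            _ = _ := by ring
    _ = _ := by ring

lemma logWeight_le_of_abs_le_add {r x y z : ℝ} (hr : 0 ≤ r) (h : |z| ≤ |x| + |y|) :
    logWeight r z ≤ 3 ^ r * (logWeight r x + logWeight r y) := by
  have key : ∀ m : ℝ, |z| ≤ 2 * |m| → logWeight r z ≤ 3 ^ r * logWeight r m := by
    intro m hm
    have hz : z ^ 2 ≤ 4 * m ^ 2 := by
      rw [← sq_abs z, ← sq_abs m]; nlinarith [abs_nonneg z]
    have hlog : Real.log (1 + z ^ 2) ≤ 2 + Real.log (1 + m ^ 2) := by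
      have h4 : Real.log 4 ≤ 2 := by
        rw [Real.log_le_iff_le_exp (by norm_num)]
        have : Real.exp 2 = Real.exp 1 * Real.exp 1 := by rw [← Real.exp_add]; norm_num
        nlinarith [Real.exp_one_gt_d9]
      calc _ ≤ Real.log (4 * (1 + m ^ 2)) := Real.log_le_log (by positivity) (by linarith)
        _ = Real.log 4 + Real.log (1 + m ^ 2) := Real.log_mul (by norm_num) (by positivity)
        _ ≤ _ := by linarith
    have h1 := one_le_one_add_log m
    unfold logWeight
    rw [← Real.mul_rpow (by norm_num) (by linarith)]
    exact Real.rpow_le_rpow (by linarith [one_le_one_add_log z]) (by linarith) hr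
  have h3 : (0 : ℝ) < 3 ^ r := by positivity
  have := mul_pos h3 (logWeight_pos r x)
  have := mul_pos h3 (logWeight_pos r y)
  rcases le_total |x| |y| with hxy | hxy
  · linarith [key y (by linarith)]
  · linarith [key x (by linarith)]

lemma taylorConst_nonneg {r : ℝ} (hr : 0 ≤ r) : 0 ≤ taylorConst r := by
  unfold taylorConst; positivity

lemma smoothYoung_add_le {r : ℝ} (hr : 0 ≤ r) (x y : ℝ) :
    smoothYoung r (x + y) ≤ smoothYoung r x + smoothYoungDeriv r x * y
      + taylorConst r * (logWeight r x * y ^ 2 + smoothYoung r y) := by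
  set M := taylorConst r * (logWeight r x + logWeight r y) with hM
  have hseg : ∀ z ∈ Set.uIcc x (x + y), |z - x| ≤ |y| ∧ |z| ≤ |x| + |y| := by
    intro z hz
    have h1 : |z - x| ≤ |y| := by simpa using Set.abs_sub_left_of_mem_uIcc hz
    refine ⟨h1, ?_⟩
    have := abs_add_le x (z - x)
    rw [add_sub_cancel] at this
    linarith
  choose D hD hDb using fun z => exists_hasDerivAt_smoothYoungDeriv hr z
  have hDM : ∀ z ∈ Set.uIcc x (x + y), ‖D z‖ ≤ M := by
    intro z hz
    refine (hDb z).trans ?_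
    calc _ ≤ (2 + 14 * r + 4 * r * |r - 1|) * (3 ^ r * (logWeight r x + logWeight r y)) := by
          gcongr; exact logWeight_le_of_abs_le_add hr (hseg z hz).2
      _ = M := by rw [hM]; unfold taylorConst; ring
  have hM0 : 0 ≤ M := (norm_nonneg _).trans (hDM x Set.left_mem_uIcc)
  have hderiv : ∀ z ∈ Set.uIcc x (x + y),
      ‖smoothYoungDeriv r z - smoothYoungDeriv r x‖ ≤ M * |y| := by
    intro z hz
    have := (convex_uIcc x (x + y)).norm_image_sub_le_of_norm_hasDerivWithin_le
      (fun w _ => (hD w).hasDerivWithinAt) hDM Set.left_mem_uIcc hz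
    exact this.trans (mul_le_mul_of_nonneg_left (hseg z hz).1 hM0)
  have := (convex_uIcc x (x + y)).norm_image_sub_le_of_norm_hasDerivWithin_le
      (f := fun z => smoothYoung r z - smoothYoungDeriv r x * z)
      (f' := fun z => smoothYoungDeriv r z - smoothYoungDeriv r x)
      (fun w _ => (((hasDerivAt_smoothYoung r w).sub
          ((hasDerivAt_id w).const_mul (smoothYoungDeriv r x))).congr_deriv
          (by rw [mul_one])).hasDerivWithinAt)
      hderiv Set.left_mem_uIcc Set.right_mem_uIcc
  have h2 := (Real.le_norm_self _).trans this
  have h3 : M * |y| * ‖x + y - x‖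
      = taylorConst r * (logWeight r x * y ^ 2 + smoothYoung r y) := by
    rw [add_sub_cancel_left, Real.norm_eq_abs, mul_assoc, ← sq, sq_abs, hM]
    unfold smoothYoung; ring
  linarith

lemma phiYoung_one_eq_smoothYoung_sqrt (r : ℝ) {w : ℝ} (hw : 0 ≤ w) :
    phiYoung 1 r w = smoothYoung r (√w) := by
  simp [phiYoung, smoothYoung, logWeight, Real.sq_sqrt hw]

lemma smoothYoung_le_phiYoung_two {r : ℝ} (hr : 0 ≤ r) (x : ℝ) :
    smoothYoung r x ≤ 2 ^ r * phiYoung 2 r |x| := by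
  have h0 := abs_nonneg x
  have hlog0 : 0 ≤ Real.log (1 + |x|) := Real.log_nonneg (by linarith)
  have hlog : Real.log (1 + x ^ 2) ≤ 2 * Real.log (1 + |x|) := by
    rw [← Real.log_rpow (by positivity)]
    refine Real.log_le_log (by positivity) ?_
    rw [Real.rpow_two, ← sq_abs x]
    nlinarith
  have : logWeight r x ≤ 2 ^ r * (1 + Real.log (1 + |x|)) ^ r := by
    rw [← Real.mul_rpow (by norm_num) (by linarith)]
    exact Real.rpow_le_rpow (by linarith [one_le_one_add_log x]) (by linarith) hr
  unfold smoothYoung phiYoung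
  rw [Real.rpow_two, sq_abs]
  nlinarith [sq_nonneg x]

lemma phiYoung_two_le_smoothYoung {r : ℝ} (hr : 0 ≤ r) (x : ℝ) :
    phiYoung 2 r |x| ≤ 2 ^ r * smoothYoung r x := by
  have h0 := abs_nonneg x
  have hlog0 : 0 ≤ Real.log (1 + |x|) := Real.log_nonneg (by linarith)
  have hlog1 := one_le_one_add_log x
  have hlog : Real.log (1 + |x|) ≤ 1 + Real.log (1 + x ^ 2) := by
    have h2 : 2 * Real.log (1 + |x|) ≤ Real.log 2 + Real.log (1 + x ^ 2) := by
      rw [← Real.log_rpow (by positivity), ← Real.log_mul (by norm_num) (by positivity)]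
      refine Real.log_le_log (by positivity) ?_
      rw [Real.rpow_two, ← sq_abs x]
      nlinarith [sq_nonneg (1 - |x|)]
    linarith [Real.log_two_lt_d9]
  have : (1 + Real.log (1 + |x|)) ^ r ≤ 2 ^ r * logWeight r x := by
    unfold logWeight
    rw [← Real.mul_rpow (by norm_num) (by linarith)]
    exact Real.rpow_le_rpow (by linarith) (by linarith) hr
  unfold smoothYoung phiYoung
  rw [Real.rpow_two, sq_abs]
  nlinarith [sq_nonneg x]

lemma phiYoung_nonneg (p r : ℝ) {x : ℝ} (hx : 0 ≤ x) : 0 ≤ phiYoung p r x := by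
  have := Real.log_nonneg (x := 1 + x) (by linarith)
  unfold phiYoung; positivity

lemma phiYoung_mono {p r x y : ℝ} (hp : 0 ≤ p) (hr : 0 ≤ r) (hx : 0 ≤ x) (hxy : x ≤ y) :
    phiYoung p r x ≤ phiYoung p r y := by
  have h1 := Real.log_nonneg (x := 1 + x) (by linarith)
  have h2 := Real.log_le_log (x := 1 + x) (y := 1 + y) (by linarith) (by linarith)
  unfold phiYoung
  exact mul_le_mul (Real.rpow_le_rpow hx hxy hp) (Real.rpow_le_rpow (by linarith) (by linarith) hr)
    (by positivity) (by have := hx.trans hxy; positivity)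

lemma phiYoung_two_div_le {r x c : ℝ} (hr : 0 ≤ r) (hx : 0 ≤ x) (hc : 1 ≤ c) :
    phiYoung 2 r (x / c) ≤ phiYoung 2 r x / c ^ 2 := by
  have hc0 : 0 < c := by linarith
  have hxc : x / c ≤ x := div_le_self hx hc
  have hxc0 : 0 ≤ x / c := by positivity
  have h1 := Real.log_nonneg (x := 1 + x / c) (by linarith)
  have h2 := Real.log_le_log (x := 1 + x / c) (y := 1 + x) (by linarith) (by linarith)
  have h3 : (1 + Real.log (1 + x / c)) ^ r ≤ (1 + Real.log (1 + x)) ^ r :=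
    Real.rpow_le_rpow (by linarith) (by linarith) hr
  unfold phiYoung
  rw [Real.rpow_two, Real.rpow_two, div_pow, mul_div_right_comm]
  gcongr

lemma smoothYoung_mul_le {r l : ℝ} (hr : 0 ≤ r) (hl0 : 0 ≤ l) (hl : l ≤ 1) (x : ℝ) :
    smoothYoung r (l * x) ≤ l ^ 2 * smoothYoung r x := by
  have : logWeight r (l * x) ≤ logWeight r x := by
    refine logWeight_le_of_abs_le hr ?_
    rw [abs_mul, abs_of_nonneg hl0]
    exact mul_le_of_le_one_left (abs_nonneg x) hl
  unfold smoothYoung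
  rw [mul_pow, mul_assoc]
  gcongr

lemma le_mul_exp_of_le_one_add_mul {a g e : ℕ → ℝ} (n : ℕ)
    (ha : ∀ k ≤ n, 0 ≤ a k) (hg : ∀ k < n, 0 ≤ g k)
    (he : ∀ k < n, 0 ≤ e k) (h : ∀ k < n, a (k + 1) ≤ (1 + g k) * a k + e k) :
    a n ≤ (a 0 + ∑ k ∈ Finset.range n, e k) * Real.exp (∑ k ∈ Finset.range n, g k) := by
  induction n with
  | zero => simp
  | succ n ih =>
    have ih := ih (fun k hk => ha k (by omega)) (fun k hk => hg k (by omega))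
      (fun k hk => he k (by omega)) (fun k hk => h k (by omega))
    have hgn := hg n (by omega)
    have hen := he n (by omega)
    have hexp : 1 + g n ≤ Real.exp (g n) := by linarith [Real.add_one_le_exp (g n)]
    rw [Finset.sum_range_succ, Finset.sum_range_succ, Real.exp_add]
    set E := Real.exp (∑ k ∈ Finset.range n, g k) with hE
    have hE1 : 1 ≤ E := Real.one_le_exp (Finset.sum_nonneg fun k hk =>
      hg k (by have := Finset.mem_range.mp hk; omega))
    have hG1 : 1 ≤ Real.exp (g n) := Real.one_le_exp hgn
    calc a (n + 1) ≤ (1 + g n) * a n + e n := h n (by omega)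
      _ ≤ Real.exp (g n) * a n + e n * (E * Real.exp (g n)) := by
          have := ha n (by omega)
          exact add_le_add (by gcongr)
            (le_mul_of_one_le_right hen (one_le_mul_of_one_le_of_one_le hE1 hG1))
      _ ≤ Real.exp (g n) * ((a 0 + ∑ k ∈ Finset.range n, e k) * E)
          + e n * (E * Real.exp (g n)) := by gcongr
      _ = _ := by ring

section Martingale

variable {Ω : Type*} {m m0 : MeasurableSpace Ω} {μ : Measure Ω}

lemma integrable_logWeight_mul_sq {r : ℝ} (hr : 0 ≤ r) {x y : Ω → ℝ}
    (hx : AEStronglyMeasurable x μ) (hy : AEStronglyMeasurable y μ)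
    (hFx : Integrable (fun ω => smoothYoung r (x ω)) μ)
    (hFy : Integrable (fun ω => smoothYoung r (y ω)) μ) :
    Integrable (fun ω => logWeight r (x ω) * y ω ^ 2) μ := by
  refine (hFx.add hFy).mono'
    (((continuous_logWeight r).comp_aestronglyMeasurable hx).mul (hy.pow 2))
    (Filter.Eventually.of_forall fun ω => ?_)
  rw [Real.norm_of_nonneg (mul_nonneg (logWeight_pos r _).le (sq_nonneg _))]
  exact logWeight_mul_sq_le hr (x ω) (y ω)

lemma integral_smoothYoung_add_le [IsProbabilityMeasure μ] {r : ℝ} (hr : 0 ≤ r) (hm : m ≤ m0)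
    {x y : Ω → ℝ} (hx : StronglyMeasurable[m] x) (hy : Integrable y μ) (hy0 : μ[y | m] =ᵐ[μ] 0)
    (hFx : Integrable (fun ω => smoothYoung r (x ω)) μ)
    (hFy : Integrable (fun ω => smoothYoung r (y ω)) μ) :
    Integrable (fun ω => smoothYoung r (x ω + y ω)) μ ∧
      ∫ ω, smoothYoung r (x ω + y ω) ∂μ ≤ ∫ ω, smoothYoung r (x ω) ∂μ
        + taylorConst r * (∫ ω, logWeight r (x ω) * y ω ^ 2 ∂μ
          + ∫ ω, smoothYoung r (y ω) ∂μ) := by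
  have hx0 : AEStronglyMeasurable x μ := (hx.mono hm).aestronglyMeasurable
  have hG : Integrable (fun ω => smoothYoungDeriv r (x ω) * y ω) μ := by
    refine (((hFx.const_mul 2).add hFy).const_mul (2 + 2 * r)).mono'
      (((continuous_smoothYoungDeriv r).comp_aestronglyMeasurable hx0).mul hy.1)
      (Filter.Eventually.of_forall fun ω => ?_)
    exact abs_smoothYoungDeriv_mul_le hr (x ω) (y ω)
  have hW := integrable_logWeight_mul_sq hr hx0 hy.1 hFx hFy
  have hG0 : ∫ ω, smoothYoungDeriv r (x ω) * y ω ∂μ = 0 := by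
    rw [← integral_condExp hm]
    refine integral_eq_zero_of_ae ?_
    have h1 := condExp_mul_of_stronglyMeasurable_left (μ := μ)
      ((continuous_smoothYoungDeriv r).comp_stronglyMeasurable hx) hG hy
    filter_upwards [h1, hy0] with ω h1 h2
    exact h1.trans (by simp [h2])
  have hR := (hFx.add hG).add ((hW.add hFy).const_mul (taylorConst r))
  have hS : Integrable (fun ω => smoothYoung r (x ω + y ω)) μ := by
    refine hR.mono' ((continuous_smoothYoung r).comp_aestronglyMeasurable (hx0.add hy.1))
      (Filter.Eventually.of_forall fun ω => ?_)
    rw [Real.norm_of_nonneg (smoothYoung_nonneg r _)]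
    exact smoothYoung_add_le hr (x ω) (y ω)
  refine ⟨hS, ?_⟩
  have := integral_mono hS hR fun ω => smoothYoung_add_le hr (x ω) (y ω)
  rw [integral_add' (hFx.add hG) ((hW.add hFy).const_mul _), integral_add' hFx hG, hG0,
    integral_const_mul] at this
  simp only [Pi.add_apply] at this
  rw [integral_add hW hFy] at this
  linarith

lemma integral_logWeight_mul_sq_le_of_condExp [IsProbabilityMeasure μ] {r : ℝ} (hr : 0 ≤ r)
    (hm : m ≤ m0) {x y : Ω → ℝ} (hx : StronglyMeasurable[m] x) (hy : AEStronglyMeasurable y μ)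
    (hFx : Integrable (fun ω => smoothYoung r (x ω)) μ)
    (hFy : Integrable (fun ω => smoothYoung r (y ω)) μ) {l : ℝ} (hl : 0 < l)
    (hv : Integrable (fun ω => phiYoung 1 r (|(μ[fun ω => y ω ^ 2 | m]) ω| / l)) μ)
    (hv1 : ∫ ω, phiYoung 1 r (|(μ[fun ω => y ω ^ 2 | m]) ω| / l) ∂μ ≤ 1) :
    ∫ ω, logWeight r (x ω) * y ω ^ 2 ∂μ ≤ l * (∫ ω, smoothYoung r (x ω) ∂μ + 1) := by
  have hx0 : AEStronglyMeasurable x μ := (hx.mono hm).aestronglyMeasurable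
  have hW := integrable_logWeight_mul_sq hr hx0 hy hFx hFy
  have hy2 : Integrable (fun ω => y ω ^ 2) μ := hFy.mono' (hy.pow 2)
    (Filter.Eventually.of_forall fun ω => by
      rw [Real.norm_of_nonneg (sq_nonneg _)]; exact sq_le_smoothYoung hr _)
  have hpull := condExp_mul_of_stronglyMeasurable_left (μ := μ)
      ((continuous_logWeight r).comp_stronglyMeasurable hx) hW hy2
  have hnn : 0 ≤ᵐ[μ] μ[fun ω => y ω ^ 2 | m] :=
    condExp_nonneg (Filter.Eventually.of_forall fun ω => sq_nonneg (y ω))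
  calc _ = ∫ ω, (μ[fun ω => logWeight r (x ω) * y ω ^ 2 | m]) ω ∂μ := (integral_condExp hm).symm
    _ ≤ ∫ ω, l * (smoothYoung r (x ω)
          + phiYoung 1 r (|(μ[fun ω => y ω ^ 2 | m]) ω| / l)) ∂μ := by
        refine integral_mono_ae integrable_condExp ((hFx.add hv).const_mul l) ?_
        filter_upwards [hpull, hnn] with ω h1 h2
        refine h1.le.trans ?_
        have h2' : 0 ≤ (μ[fun ω => y ω ^ 2 | m]) ω := h2
        simp only [Pi.mul_apply]
        rw [abs_of_nonneg h2']
        set v := (μ[fun ω => y ω ^ 2 | m]) ω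
        have hw : 0 ≤ v / l := by positivity
        rw [phiYoung_one_eq_smoothYoung_sqrt r hw]
        have := logWeight_mul_sq_le hr (x ω) (√(v / l))
        rw [Real.sq_sqrt hw] at this
        calc _ = l * (logWeight r (x ω) * (v / l)) := by field_simp
          _ ≤ _ := mul_le_mul_of_nonneg_left this hl.le
    _ = l * (∫ ω, smoothYoung r (x ω) ∂μ
          + ∫ ω, phiYoung 1 r (|(μ[fun ω => y ω ^ 2 | m]) ω| / l) ∂μ) := by
        rw [integral_const_mul, integral_add hFx hv]
    _ ≤ _ := by gcongr

lemma stronglyMeasurable_partialSum {ℱ : ℕ → MeasurableSpace Ω} (hmono : Monotone ℱ)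
    {n : ℕ} {e : ℕ → Ω → ℝ} (he : ∀ k < n, StronglyMeasurable[ℱ (k + 1)] (e k)) {k : ℕ}
    (hk : k ≤ n) : StronglyMeasurable[ℱ k] (fun ω => ∑ j ∈ Finset.range k, e j ω) := by
  refine Finset.stronglyMeasurable_fun_sum _ fun j hj => ?_
  have := Finset.mem_range.mp hj
  exact (he j (by omega)).mono (hmono (by omega))

/-- Moment bound for a martingale whose increments are small in `smoothYoung` modular. -/
lemma integral_smoothYoung_sum_le_of_increments [IsProbabilityMeasure μ] {r : ℝ} (hr : 0 ≤ r)
    {ℱ : ℕ → MeasurableSpace Ω} (hℱ : ∀ k, ℱ k ≤ m0) (hmono : Monotone ℱ) {n : ℕ}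
    {e : ℕ → Ω → ℝ} (he : ∀ k < n, StronglyMeasurable[ℱ (k + 1)] (e k))
    (hInt : ∀ k < n, Integrable (e k) μ) (hmart : ∀ k < n, μ[e k | ℱ k] =ᵐ[μ] 0)
    {l : ℕ → ℝ} (hl : ∀ k < n, 0 < l k) (hsum : ∑ k ∈ Finset.range n, l k ^ 2 ≤ 1) {M : ℝ}
    (hF : ∀ k < n, Integrable (fun ω => smoothYoung r (e k ω / l k)) μ)
    (hM : ∀ k < n, ∫ ω, smoothYoung r (e k ω / l k) ∂μ ≤ M) (hM0 : 0 ≤ M) :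
    Integrable (fun ω => smoothYoung r (∑ k ∈ Finset.range n, e k ω)) μ ∧
      ∫ ω, smoothYoung r (∑ k ∈ Finset.range n, e k ω) ∂μ
        ≤ taylorConst r * (2 * M) * Real.exp (taylorConst r) := by
  have hC := taylorConst_nonneg hr
  have hl1 : ∀ k < n, l k ≤ 1 := fun k hk => by
    have := Finset.single_le_sum (f := fun k => l k ^ 2) (fun i _ => sq_nonneg (l i))
      (Finset.mem_range.mpr hk)
    have h2 : l k ^ 2 ≤ 1 := this.trans hsum
    exact (sq_le_one_iff₀ (hl k hk).le).mp h2
  have hscale : ∀ k < n, ∀ ω, e k ω = l k * (e k ω / l k) := fun k hk ω => by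
    have := (hl k hk).ne'
    field_simp
  have hFle : ∀ k < n, ∀ ω, smoothYoung r (e k ω) ≤ l k ^ 2 * smoothYoung r (e k ω / l k) :=
    fun k hk ω => by
      conv_lhs => rw [hscale k hk ω]
      exact smoothYoung_mul_le hr (hl k hk).le (hl1 k hk) _
  have hFe : ∀ k < n, Integrable (fun ω => smoothYoung r (e k ω)) μ := fun k hk => by
    refine ((hF k hk).const_mul (l k ^ 2)).mono'
      ((continuous_smoothYoung r).comp_aestronglyMeasurable (hInt k hk).1)
      (Filter.Eventually.of_forall fun ω => ?_)
    rw [Real.norm_of_nonneg (smoothYoung_nonneg r _)]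
    exact hFle k hk ω
  have hFeM : ∀ k < n, ∫ ω, smoothYoung r (e k ω) ∂μ ≤ l k ^ 2 * M := fun k hk => by
    refine (integral_mono (hFe k hk) ((hF k hk).const_mul _) (hFle k hk)).trans ?_
    rw [integral_const_mul]
    exact mul_le_mul_of_nonneg_left (hM k hk) (sq_nonneg _)
  have hIS : ∀ k ≤ n, Integrable (fun ω => smoothYoung r (∑ j ∈ Finset.range k, e j ω)) μ := by
    intro k
    induction k with
    | zero => intro _; simp [smoothYoung]
    | succ k ih =>
      intro hk
      simp only [Finset.sum_range_succ]
      exact (integral_smoothYoung_add_le hr (hℱ k)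
        (stronglyMeasurable_partialSum hmono he (by omega)) (hInt k hk) (hmart k hk)
        (ih (by omega)) (hFe k hk)).1
  refine ⟨hIS n le_rfl, ?_⟩
  set a : ℕ → ℝ := fun k => ∫ ω, smoothYoung r (∑ j ∈ Finset.range k, e j ω) ∂μ with ha
  have hstep : ∀ k < n, a (k + 1) ≤ (1 + taylorConst r * l k ^ 2) * a k
      + taylorConst r * (2 * M) * l k ^ 2 := by
    intro k hk
    have hSm := stronglyMeasurable_partialSum hmono he hk.le
    have h1 := (integral_smoothYoung_add_le hr (hℱ k) hSm (hInt k hk) (hmart k hk)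
      (hIS k hk.le) (hFe k hk)).2
    have h2 : ∫ ω, logWeight r (∑ j ∈ Finset.range k, e j ω) * e k ω ^ 2 ∂μ
        ≤ l k ^ 2 * (a k + M) := by
      have hW := integrable_logWeight_mul_sq hr (hSm.mono (hℱ k)).aestronglyMeasurable
        (hInt k hk).1 (hIS k hk.le) (hFe k hk)
      refine (integral_mono hW (((hIS k hk.le).add (hF k hk)).const_mul (l k ^ 2))
        fun ω => ?_).trans ?_
      · have := mul_le_mul_of_nonneg_left (logWeight_mul_sq_le hr
          (∑ j ∈ Finset.range k, e j ω) (e k ω / l k)) (sq_nonneg (l k))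
        refine le_trans (le_of_eq ?_) this
        have := (hl k hk).ne'
        field_simp
      · rw [integral_const_mul, integral_add' (hIS k hk.le) (hF k hk)]
        exact mul_le_mul_of_nonneg_left (by linarith [hM k hk]) (sq_nonneg _)
    have h3 := mul_le_mul_of_nonneg_left (add_le_add h2 (hFeM k hk)) hC
    have h4 : a (k + 1) = ∫ ω, smoothYoung r (∑ j ∈ Finset.range k, e j ω + e k ω) ∂μ := by
      simp only [ha, Finset.sum_range_succ]
    rw [h4]
    linarith
  have hgr := le_mul_exp_of_le_one_add_mul (a := a) n
    (fun k _ => integral_nonneg fun ω => smoothYoung_nonneg r _)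
    (fun k _ => mul_nonneg hC (sq_nonneg (l k)))
    (fun k _ => by positivity) hstep
  have ha0 : a 0 = 0 := by simp [ha, smoothYoung]
  rw [ha0, zero_add, ← Finset.mul_sum, ← Finset.mul_sum] at hgr
  refine hgr.trans ?_
  refine mul_le_mul (mul_le_of_le_one_right (by positivity) hsum)
    (Real.exp_le_exp.mpr (mul_le_of_le_one_right hC hsum)) (Real.exp_pos _).le (by positivity)

/-- The running maximum of the absolute values of a sequence of functions. -/
def runningMax (e : ℕ → Ω → ℝ) : ℕ → Ω → ℝ
  | 0, _ => 0
  | k + 1, ω => max (runningMax e k ω) |e k ω|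

lemma runningMax_nonneg (e : ℕ → Ω → ℝ) (k : ℕ) (ω : Ω) : 0 ≤ runningMax e k ω := by
  induction k with
  | zero => exact le_rfl
  | succ k ih => exact ih.trans (le_max_left _ _)

lemma runningMax_le {e : ℕ → Ω → ℝ} {n : ℕ} {ω : Ω} {D : ℝ} (hD0 : 0 ≤ D)
    (hD : ∀ k < n, |e k ω| ≤ D) {k : ℕ} (hk : k ≤ n) : runningMax e k ω ≤ D := by
  induction k with
  | zero => exact hD0
  | succ k ih => exact max_le (ih (by omega)) (hD k hk)

lemma stronglyMeasurable_runningMax {ℱ : ℕ → MeasurableSpace Ω} (hmono : Monotone ℱ)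
    {n : ℕ} {e : ℕ → Ω → ℝ} (he : ∀ k < n, StronglyMeasurable[ℱ (k + 1)] (e k)) {k : ℕ}
    (hk : k ≤ n) : StronglyMeasurable[ℱ k] (runningMax e k) := by
  induction k with
  | zero => exact @stronglyMeasurable_const _ _ (ℱ 0) _ 0
  | succ k ih =>
    have h1 : StronglyMeasurable[ℱ (k + 1)] (runningMax e k) :=
      (ih (by omega)).mono (hmono (by omega))
    have h2 : StronglyMeasurable[ℱ (k + 1)] (fun ω => |e k ω|) :=
      continuous_abs.comp_stronglyMeasurable (he k hk)
    exact @StronglyMeasurable.sup _ _ _ _ (ℱ (k + 1)) _ _ _ h1 h2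

/-- Moment bound for a martingale controlled by its maximal increment and its conditional
variances. -/
lemma integral_smoothYoung_sum_le_of_condExp [IsProbabilityMeasure μ] {r : ℝ} (hr : 0 ≤ r)
    {ℱ : ℕ → MeasurableSpace Ω} (hℱ : ∀ k, ℱ k ≤ m0) (hmono : Monotone ℱ) {n : ℕ}
    {e : ℕ → Ω → ℝ} (he : ∀ k < n, StronglyMeasurable[ℱ (k + 1)] (e k))
    (hInt : ∀ k < n, Integrable (e k) μ) (hmart : ∀ k < n, μ[e k | ℱ k] =ᵐ[μ] 0)
    {l : ℕ → ℝ} (hl : ∀ k < n, 0 < l k) (hsum : ∑ k ∈ Finset.range n, l k ≤ 1)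
    (hv : ∀ k < n, Integrable
      (fun ω => phiYoung 1 r (|(μ[fun ω => e k ω ^ 2 | ℱ k]) ω| / l k)) μ)
    (hv1 : ∀ k < n, ∫ ω, phiYoung 1 r (|(μ[fun ω => e k ω ^ 2 | ℱ k]) ω| / l k) ∂μ ≤ 1)
    {D : Ω → ℝ} (hDm : AEStronglyMeasurable D μ) (hD0 : ∀ ω, 0 ≤ D ω)
    (hD : ∀ k < n, ∀ ω, |e k ω| ≤ D ω) {M : ℝ}
    (hFD : Integrable (fun ω => smoothYoung r (D ω)) μ)
    (hM : ∫ ω, smoothYoung r (D ω) ∂μ ≤ M) :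
    Integrable (fun ω => smoothYoung r (∑ k ∈ Finset.range n, e k ω)) μ ∧
      ∫ ω, smoothYoung r (∑ k ∈ Finset.range n, e k ω) ∂μ
        ≤ taylorConst r * (2 + 2 * M) * Real.exp (taylorConst r) := by
  have hC := taylorConst_nonneg hr
  have hM0 : 0 ≤ M := (integral_nonneg fun ω => smoothYoung_nonneg r _).trans hM
  have hleD : ∀ {x : Ω → ℝ}, AEStronglyMeasurable x μ → (∀ ω, |x ω| ≤ D ω) →
      Integrable (fun ω => smoothYoung r (x ω)) μ := fun {x} hxm hx => by
    refine hFD.mono' ((continuous_smoothYoung r).comp_aestronglyMeasurable hxm)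
      (Filter.Eventually.of_forall fun ω => ?_)
    rw [Real.norm_of_nonneg (smoothYoung_nonneg r _)]
    exact smoothYoung_le_of_abs_le hr ((hx ω).trans (le_abs_self _))
  have hFe : ∀ k < n, Integrable (fun ω => smoothYoung r (e k ω)) μ := fun k hk =>
    hleD (hInt k hk).1 (hD k hk)
  have hRm : ∀ k ≤ n, StronglyMeasurable[ℱ k] (runningMax e k) := fun k hk =>
    stronglyMeasurable_runningMax hmono he hk
  have hRD : ∀ k ≤ n, ∀ ω, |runningMax e k ω| ≤ D ω := fun k hk ω => by
    rw [abs_of_nonneg (runningMax_nonneg e k ω)]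
    exact runningMax_le (hD0 ω) (fun k hk => hD k hk ω) hk
  have hFR : ∀ k ≤ n, Integrable (fun ω => smoothYoung r (runningMax e k ω)) μ := fun k hk =>
    hleD ((hRm k hk).mono (hℱ k)).aestronglyMeasurable (hRD k hk)
  have hRle : ∀ k ≤ n, ∀ ω, smoothYoung r (runningMax e k ω) ≤ smoothYoung r (D ω) :=
    fun k hk ω => smoothYoung_le_of_abs_le hr ((hRD k hk ω).trans (le_abs_self _))
  have hB : ∀ k ≤ n, Integrable (fun ω => logWeight r (runningMax e k ω) * D ω ^ 2) μ :=
    fun k hk => integrable_logWeight_mul_sq hr ((hRm k hk).mono (hℱ k)).aestronglyMeasurable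
      hDm (hFR k hk) hFD
  set B : ℕ → ℝ := fun k => ∫ ω, logWeight r (runningMax e k ω) * D ω ^ 2 ∂μ
  have hRstep : ∀ k ω, logWeight r (runningMax e k ω) ≤ logWeight r (runningMax e (k + 1) ω) :=
    fun k ω => logWeight_le_of_abs_le hr (by
      rw [abs_of_nonneg (runningMax_nonneg e _ ω), abs_of_nonneg (runningMax_nonneg e _ ω)]
      exact le_max_left _ _)
  have hBmono : ∀ k < n, B k ≤ B (k + 1) := fun k hk =>
    integral_mono (hB k hk.le) (hB (k + 1) hk) fun ω =>
      mul_le_mul_of_nonneg_right (hRstep k ω) (sq_nonneg _)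
  have hBn : B n ≤ M := (integral_mono (hB n le_rfl) hFD fun ω => by
    have := mul_le_mul_of_nonneg_right (logWeight_le_of_abs_le hr
      ((hRD n le_rfl ω).trans (le_abs_self _))) (sq_nonneg (D ω))
    exact this.trans (mul_comm _ _).le).trans hM
  have hB0 : 0 ≤ B 0 := integral_nonneg fun ω =>
    mul_nonneg (logWeight_pos r _).le (sq_nonneg _)
  have hFeb : ∀ k < n, ∫ ω, smoothYoung r (e k ω) ∂μ ≤ l k * (M + 1) + (B (k + 1) - B k) := by
    intro k hk
    have hW := integrable_logWeight_mul_sq hr ((hRm k hk.le).mono (hℱ k)).aestronglyMeasurable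
      (hInt k hk).1 (hFR k hk.le) (hFe k hk)
    have h1 := integral_logWeight_mul_sq_le_of_condExp hr (hℱ k) (hRm k hk.le) (hInt k hk).1
      (hFR k hk.le) (hFe k hk) (hl k hk) (hv k hk) (hv1 k hk)
    have h2 : ∫ ω, smoothYoung r (runningMax e k ω) ∂μ ≤ M :=
      (integral_mono (hFR k hk.le) hFD (hRle k hk.le)).trans hM
    have h3 := integral_mono (hFe k hk) (hW.add ((hB (k + 1) hk).sub (hB k hk.le))) fun ω => by
      have h4 : logWeight r (e k ω) ≤ logWeight r (runningMax e (k + 1) ω) :=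
        logWeight_le_of_abs_le hr ((le_max_right _ _).trans (le_abs_self _))
      have h5 : e k ω ^ 2 ≤ D ω ^ 2 := sq_le_sq.mpr ((hD k hk ω).trans (le_abs_self _))
      have h6 := mul_le_mul_of_nonneg_left h4 (sq_nonneg (e k ω))
      have h7 := mul_le_mul_of_nonneg_left h5 (sub_nonneg.mpr (hRstep k ω))
      simp only [Pi.add_apply, Pi.sub_apply, smoothYoung]
      linarith
    rw [integral_add' hW ((hB (k + 1) hk).sub (hB k hk.le)),
      integral_sub' (hB (k + 1) hk) (hB k hk.le)] at h3
    have h8 := mul_le_mul_of_nonneg_left (add_le_add_left h2 1) (hl k hk).le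
    linarith
  have hIS : ∀ k ≤ n, Integrable (fun ω => smoothYoung r (∑ j ∈ Finset.range k, e j ω)) μ := by
    intro k
    induction k with
    | zero => intro _; simp [smoothYoung]
    | succ k ih =>
      intro hk
      simp only [Finset.sum_range_succ]
      exact (integral_smoothYoung_add_le hr (hℱ k)
        (stronglyMeasurable_partialSum hmono he (by omega)) (hInt k hk) (hmart k hk)
        (ih (by omega)) (hFe k hk)).1
  refine ⟨hIS n le_rfl, ?_⟩
  set a : ℕ → ℝ := fun k => ∫ ω, smoothYoung r (∑ j ∈ Finset.range k, e j ω) ∂μ with ha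
  have hstep : ∀ k < n, a (k + 1) ≤ (1 + taylorConst r * l k) * a k
      + taylorConst r * ((2 + M) * l k + (B (k + 1) - B k)) := by
    intro k hk
    have hSm := stronglyMeasurable_partialSum hmono he hk.le
    have h1 := (integral_smoothYoung_add_le hr (hℱ k) hSm (hInt k hk) (hmart k hk)
      (hIS k hk.le) (hFe k hk)).2
    have h2 := integral_logWeight_mul_sq_le_of_condExp hr (hℱ k) hSm (hInt k hk).1
      (hIS k hk.le) (hFe k hk) (hl k hk) (hv k hk) (hv1 k hk)
    have h3 := mul_le_mul_of_nonneg_left (add_le_add h2 (hFeb k hk)) hC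
    have h4 : a (k + 1) = ∫ ω, smoothYoung r (∑ j ∈ Finset.range k, e j ω + e k ω) ∂μ := by
      simp only [ha, Finset.sum_range_succ]
    rw [h4]
    linarith
  have hgr := le_mul_exp_of_le_one_add_mul (a := a) n
    (fun k _ => integral_nonneg fun ω => smoothYoung_nonneg r _)
    (fun k hk => mul_nonneg hC (hl k hk).le)
    (fun k hk => mul_nonneg hC (add_nonneg (mul_nonneg (by linarith) (hl k hk).le)
      (sub_nonneg.mpr (hBmono k hk)))) hstep
  have ha0 : a 0 = 0 := by simp [ha, smoothYoung]
  rw [ha0, zero_add, ← Finset.mul_sum, ← Finset.mul_sum, Finset.sum_add_distrib,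
    Finset.sum_range_sub, ← Finset.mul_sum] at hgr
  refine hgr.trans ?_
  have h5 : (2 + M) * ∑ k ∈ Finset.range n, l k ≤ 2 + M :=
    mul_le_of_le_one_right (by linarith) hsum
  exact mul_le_mul (mul_le_mul_of_nonneg_left (by linarith) hC)
    (Real.exp_le_exp.mpr (mul_le_of_le_one_right hC hsum)) (Real.exp_pos _).le (by positivity)

end Martingale

section OrliczNorm

variable {Ω : Type*} {m0 : MeasurableSpace Ω} {μ : Measure Ω}

lemma measurable_phiYoung (p r : ℝ) : Measurable (phiYoung p r) := by
  unfold phiYoung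
  fun_prop

lemma lintegral_phiYoung_le_one_of_orliczNorm_lt {p r : ℝ} (hp : 0 ≤ p) (hr : 0 ≤ r)
    {X : Ω → ℝ} {l : ℝ} (h : orliczNorm μ p r X < ENNReal.ofReal l) :
    ∫⁻ ω, ENNReal.ofReal (phiYoung p r (|X ω| / l)) ∂μ ≤ 1 := by
  obtain ⟨t, ⟨ht0, httop, ht⟩, htl⟩ := sInf_lt_iff.mp h
  refine le_trans (lintegral_mono fun ω => ENNReal.ofReal_le_ofReal ?_) ht
  have htpos : 0 < t.toReal := ENNReal.toReal_pos ht0.ne' httop.ne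
  have hle : t.toReal ≤ l := (ENNReal.lt_ofReal_iff_toReal_lt httop.ne).mp htl |>.le
  exact phiYoung_mono hp hr (by have := htpos.trans_le hle; positivity) (by gcongr)

lemma integrable_phiYoung_of_orliczNorm_lt {p r : ℝ} (hp : 0 ≤ p) (hr : 0 ≤ r)
    {X : Ω → ℝ} (hX : AEStronglyMeasurable X μ) {l : ℝ} (hl : 0 < l)
    (h : orliczNorm μ p r X < ENNReal.ofReal l) :
    Integrable (fun ω => phiYoung p r (|X ω| / l)) μ ∧
      ∫ ω, phiYoung p r (|X ω| / l) ∂μ ≤ 1 := by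
  have h1 := lintegral_phiYoung_le_one_of_orliczNorm_lt hp hr h
  have hnn : ∀ ω, 0 ≤ phiYoung p r (|X ω| / l) := fun ω => phiYoung_nonneg p r (by positivity)
  have hmeas : AEStronglyMeasurable (fun ω => phiYoung p r (|X ω| / l)) μ :=
    ((measurable_phiYoung p r).comp_aemeasurable
      ((continuous_abs.measurable.comp_aemeasurable
        hX.aemeasurable).div_const l)).aestronglyMeasurable
  have hInt : Integrable (fun ω => phiYoung p r (|X ω| / l)) μ :=
    (lintegral_ofReal_ne_top_iff_integrable hmeas (Filter.Eventually.of_forall hnn)).mp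
      (ne_top_of_le_ne_top one_ne_top h1)
  refine ⟨hInt, ?_⟩
  rw [← ofReal_integral_eq_lintegral_ofReal hInt (Filter.Eventually.of_forall hnn)] at h1
  exact ENNReal.ofReal_le_one.mp h1

lemma integrable_smoothYoung_of_orliczNorm_lt {r : ℝ} (hr : 0 ≤ r)
    {X : Ω → ℝ} (hX : AEStronglyMeasurable X μ) {l : ℝ} (hl : 0 < l)
    (h : orliczNorm μ 2 r X < ENNReal.ofReal l) :
    Integrable (fun ω => smoothYoung r (X ω / l)) μ ∧
      ∫ ω, smoothYoung r (X ω / l) ∂μ ≤ 2 ^ r := by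
  obtain ⟨h1, h2⟩ := integrable_phiYoung_of_orliczNorm_lt (by norm_num) hr hX hl h
  have hle : ∀ ω, smoothYoung r (X ω / l) ≤ 2 ^ r * phiYoung 2 r (|X ω| / l) := fun ω => by
    have := smoothYoung_le_phiYoung_two hr (X ω / l)
    rwa [abs_div, abs_of_pos hl] at this
  have hInt : Integrable (fun ω => smoothYoung r (X ω / l)) μ := by
    refine (h1.const_mul (2 ^ r)).mono' ((continuous_smoothYoung r).comp_aestronglyMeasurable
      (hX.mul_const l⁻¹)) (Filter.Eventually.of_forall fun ω => ?_)
    rw [Real.norm_of_nonneg (smoothYoung_nonneg r _)]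
    exact hle ω
  refine ⟨hInt, (integral_mono hInt (h1.const_mul _) hle).trans ?_⟩
  rw [integral_const_mul]
  exact mul_le_of_le_one_right (by positivity) h2

lemma orliczNorm_two_le_of_integral_smoothYoung_le {r : ℝ} (hr : 0 ≤ r) {X : Ω → ℝ} {s A : ℝ}
    (hs : 0 < s) (hInt : Integrable (fun ω => smoothYoung r (X ω / s)) μ)
    (hA : ∫ ω, smoothYoung r (X ω / s) ∂μ ≤ A) :
    orliczNorm μ 2 r X ≤ ENNReal.ofReal ((1 + 2 ^ r * A) * s) := by
  have hA0 : 0 ≤ A := (integral_nonneg fun ω => smoothYoung_nonneg r _).trans hA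
  set c := 1 + 2 ^ r * A with hc
  have hc1 : 1 ≤ c := le_add_of_nonneg_right (by positivity)
  have hcs : 0 < c * s := by positivity
  refine sInf_le ⟨ENNReal.ofReal_pos.mpr hcs, ENNReal.ofReal_lt_top, ?_⟩
  rw [ENNReal.toReal_ofReal hcs.le]
  have hI := hInt.const_mul (2 ^ r / c ^ 2)
  calc _ ≤ ∫⁻ ω, ENNReal.ofReal (2 ^ r / c ^ 2 * smoothYoung r (X ω / s)) ∂μ := by
        refine lintegral_mono fun ω => ENNReal.ofReal_le_ofReal ?_
        have h1 : |X ω| / (c * s) = |X ω / s| / c := by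
          rw [abs_div, abs_of_pos hs, div_div, mul_comm]
        rw [h1, div_mul_eq_mul_div]
        refine (phiYoung_two_div_le hr (abs_nonneg _) hc1).trans ?_
        gcongr
        exact phiYoung_two_le_smoothYoung hr _
    _ = ENNReal.ofReal (∫ ω, 2 ^ r / c ^ 2 * smoothYoung r (X ω / s) ∂μ) := by
        refine (ofReal_integral_eq_lintegral_ofReal hI
          (Filter.Eventually.of_forall fun ω => ?_)).symm
        exact mul_nonneg (by positivity) (smoothYoung_nonneg r _)
    _ ≤ 1 := by
        rw [ENNReal.ofReal_le_one, integral_const_mul, div_mul_eq_mul_div,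
          div_le_one (by positivity)]
        calc _ ≤ 2 ^ r * A := by gcongr
          _ ≤ c := by linarith
          _ ≤ c ^ 2 := le_self_pow₀ hc1 two_ne_zero

lemma condExp_div_const {m : MeasurableSpace Ω} (f : Ω → ℝ) (s : ℝ) :
    μ[fun ω => f ω / s | m] =ᵐ[μ] fun ω => (μ[f | m]) ω / s := by
  have h : (fun ω => f ω / s) = s⁻¹ • f := by
    ext ω; simp [div_eq_inv_mul]
  rw [h]
  filter_upwards [condExp_smul (μ := μ) s⁻¹ f m] with ω hω
  rw [hω]
  simp [div_eq_inv_mul]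

/-- The constant in the Burkholder-type inequality. -/
def burkholderConst (r : ℝ) : ℝ :=
  1 + 2 ^ r * (taylorConst r * (2 * 2 ^ r) * Real.exp (taylorConst r))

/-- The constant in the Rosenthal-type inequality. -/
def rosenthalConst (r : ℝ) : ℝ :=
  1 + 2 ^ r * (taylorConst r * (2 + 2 * 2 ^ r) * Real.exp (taylorConst r))

lemma burkholderConst_pos {r : ℝ} (hr : 0 ≤ r) : 0 < burkholderConst r := by
  have := taylorConst_nonneg hr
  unfold burkholderConst; positivity

lemma rosenthalConst_pos {r : ℝ} (hr : 0 ≤ r) : 0 < rosenthalConst r := by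
  have := taylorConst_nonneg hr
  unfold rosenthalConst; positivity

lemma orliczNorm_sum_sq_le [IsProbabilityMeasure μ] {r : ℝ} (hr : 0 ≤ r)
    {ℱ : ℕ → MeasurableSpace Ω} (hℱ : ∀ k, ℱ k ≤ m0) (hmono : Monotone ℱ) {n : ℕ} (hn : 1 ≤ n)
    {e : ℕ → Ω → ℝ} (he : ∀ k < n, StronglyMeasurable[ℱ (k + 1)] (e k))
    (hInt : ∀ k < n, Integrable (e k) μ) (hmart : ∀ k < n, μ[e k | ℱ k] =ᵐ[μ] 0) :
    orliczNorm μ 2 r (fun ω => ∑ k ∈ Finset.range n, e k ω) ^ (2 : ℝ) ≤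
      ENNReal.ofReal (burkholderConst r ^ 2)
        * ∑ k ∈ Finset.range n, orliczNorm μ 2 r (e k) ^ (2 : ℝ) := by
  have hc := burkholderConst_pos hr
  by_cases hfin : ∃ k ∈ Finset.range n, orliczNorm μ 2 r (e k) = ⊤
  · have : ∑ k ∈ Finset.range n, orliczNorm μ 2 r (e k) ^ (2 : ℝ) = ⊤ :=
      ENNReal.sum_eq_top.mpr (by
        obtain ⟨k, hk, h⟩ := hfin
        exact ⟨k, hk, by rw [h]; exact ENNReal.top_rpow_of_pos (by norm_num)⟩)
    rw [this, ENNReal.mul_top (by simpa using by positivity)]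
    exact le_top
  push Not at hfin
  obtain ⟨N, hN0, hNe⟩ : ∃ N : ℕ → ℝ, (∀ k, 0 ≤ N k) ∧
      ∀ k < n, orliczNorm μ 2 r (e k) = ENNReal.ofReal (N k) :=
    ⟨fun k => (orliczNorm μ 2 r (e k)).toReal, fun k => ENNReal.toReal_nonneg,
      fun k hk => (ENNReal.ofReal_toReal (hfin k (Finset.mem_range.mpr hk))).symm⟩
  have hbound : ∀ δ : ℝ, 0 < δ → orliczNorm μ 2 r (fun ω => ∑ k ∈ Finset.range n, e k ω)
      ≤ ENNReal.ofReal (burkholderConst r * √(∑ k ∈ Finset.range n, (N k + δ) ^ 2)) := by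
    intro δ hδ
    set T := ∑ k ∈ Finset.range n, (N k + δ) ^ 2 with hT
    have hpos : ∀ k, 0 < N k + δ := fun k => add_pos_of_nonneg_of_pos (hN0 k) hδ
    have hT0 : 0 < T := Finset.sum_pos (fun k _ => pow_pos (hpos k) 2)
      (Finset.nonempty_range_iff.mpr (by omega))
    have hs : 0 < √T := Real.sqrt_pos.mpr hT0
    have hscale : ∀ k ω, e k ω / √T / ((N k + δ) / √T) = e k ω / (N k + δ) := fun k ω => by
      have := (hpos k).ne'
      field_simp
    have hF := fun k (hk : k < n) => integrable_smoothYoung_of_orliczNorm_lt hr (hInt k hk).1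
      (hpos k) (by
        rw [hNe k hk]
        exact (ENNReal.ofReal_lt_ofReal_iff (hpos k)).mpr (by linarith))
    have key := integral_smoothYoung_sum_le_of_increments (μ := μ) hr hℱ hmono (n := n)
      (e := fun k ω => e k ω / √T) (l := fun k => (N k + δ) / √T) (M := 2 ^ r)
      (fun k hk => (he k hk).mul_const _)
      (fun k hk => (hInt k hk).div_const _)
      (fun k hk => by
        filter_upwards [condExp_div_const (μ := μ) (m := ℱ k) (e k) (√T), hmart k hk] with ω h1 h2
        rw [h1, h2]; simp)
      (fun k _ => div_pos (hpos k) hs)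
      (by
        simp only [div_pow, Real.sq_sqrt hT0.le]
        rw [← Finset.sum_div, ← hT, div_self hT0.ne'])
      (fun k hk => by simpa only [hscale] using (hF k hk).1)
      (fun k hk => by simpa only [hscale] using (hF k hk).2)
      (by positivity)
    simp only [← Finset.sum_div] at key
    exact orliczNorm_two_le_of_integral_smoothYoung_le hr hs key.1 key.2
  have hlim : orliczNorm μ 2 r (fun ω => ∑ k ∈ Finset.range n, e k ω)
      ≤ ENNReal.ofReal (burkholderConst r * √(∑ k ∈ Finset.range n, N k ^ 2)) := by
    have hcont : Continuous fun δ : ℝ =>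
        ENNReal.ofReal (burkholderConst r * √(∑ k ∈ Finset.range n, (N k + δ) ^ 2)) := by
      refine ENNReal.continuous_ofReal.comp ?_
      fun_prop
    have ht := (hcont.tendsto 0).mono_left (nhdsWithin_le_nhds (s := Set.Ioi 0))
    simp only [add_zero] at ht
    exact ge_of_tendsto ht (Filter.eventually_of_mem self_mem_nhdsWithin fun δ hδ => hbound δ hδ)
  calc _ ≤ ENNReal.ofReal (burkholderConst r * √(∑ k ∈ Finset.range n, N k ^ 2)) ^ (2 : ℝ) :=
        ENNReal.rpow_le_rpow hlim (by norm_num)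
    _ = _ := by
        rw [ENNReal.ofReal_rpow_of_nonneg (by positivity) (by norm_num), Real.rpow_two, mul_pow,
          Real.sq_sqrt (by positivity), ENNReal.ofReal_mul (by positivity),
          ENNReal.ofReal_sum_of_nonneg fun k _ => sq_nonneg _]
        congr 1
        refine Finset.sum_congr rfl fun k hk => ?_
        rw [hNe k (Finset.mem_range.mp hk),
          ENNReal.ofReal_rpow_of_nonneg (hN0 k) (by norm_num), Real.rpow_two]

lemma orliczNorm_sum_le [IsProbabilityMeasure μ] {r : ℝ} (hr : 0 ≤ r)
    {ℱ : ℕ → MeasurableSpace Ω} (hℱ : ∀ k, ℱ k ≤ m0) (hmono : Monotone ℱ) {n : ℕ}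
    {e : ℕ → Ω → ℝ} (he : ∀ k < n, StronglyMeasurable[ℱ (k + 1)] (e k))
    (hInt : ∀ k < n, Integrable (e k) μ) (hmart : ∀ k < n, μ[e k | ℱ k] =ᵐ[μ] 0)
    {D : Ω → ℝ} (hDm : AEStronglyMeasurable D μ) (hD0 : ∀ ω, 0 ≤ D ω)
    (hD : ∀ k < n, ∀ ω, |e k ω| ≤ D ω) :
    orliczNorm μ 2 r (fun ω => ∑ k ∈ Finset.range n, e k ω) ≤
      ENNReal.ofReal (rosenthalConst r) * orliczNorm μ 2 r D
        + ENNReal.ofReal (rosenthalConst r) * (∑ k ∈ Finset.range n,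
          orliczNorm μ 1 r (μ[fun ω => e k ω ^ 2 | ℱ k])) ^ ((1 : ℝ) / 2) := by
  have hc := rosenthalConst_pos hr
  have hc' : ENNReal.ofReal (rosenthalConst r) ≠ 0 := by simpa using hc
  by_cases hDtop : orliczNorm μ 2 r D = ⊤
  · rw [hDtop, ENNReal.mul_top hc', top_add]
    exact le_top
  by_cases hfin : ∃ k ∈ Finset.range n, orliczNorm μ 1 r (μ[fun ω => e k ω ^ 2 | ℱ k]) = ⊤
  · rw [ENNReal.sum_eq_top.mpr hfin, ENNReal.top_rpow_of_pos (by norm_num),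
      ENNReal.mul_top hc', add_top]
    exact le_top
  push Not at hfin
  obtain ⟨P, hP0, hPe⟩ : ∃ P : ℝ, 0 ≤ P ∧ orliczNorm μ 2 r D = ENNReal.ofReal P :=
    ⟨_, ENNReal.toReal_nonneg, (ENNReal.ofReal_toReal hDtop).symm⟩
  obtain ⟨N, hN0, hNe⟩ : ∃ N : ℕ → ℝ, (∀ k, 0 ≤ N k) ∧
      ∀ k < n, orliczNorm μ 1 r (μ[fun ω => e k ω ^ 2 | ℱ k]) = ENNReal.ofReal (N k) :=
    ⟨fun k => (orliczNorm μ 1 r (μ[fun ω => e k ω ^ 2 | ℱ k])).toReal,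
      fun k => ENNReal.toReal_nonneg,
      fun k hk => (ENNReal.ofReal_toReal (hfin k (Finset.mem_range.mpr hk))).symm⟩
  have hbound : ∀ δ : ℝ, 0 < δ → orliczNorm μ 2 r (fun ω => ∑ k ∈ Finset.range n, e k ω)
      ≤ ENNReal.ofReal (rosenthalConst r
        * √((P + δ) ^ 2 + ∑ k ∈ Finset.range n, (N k + δ))) := by
    intro δ hδ
    set T := (P + δ) ^ 2 + ∑ k ∈ Finset.range n, (N k + δ) with hT
    have hpos : ∀ k, 0 < N k + δ := fun k => add_pos_of_nonneg_of_pos (hN0 k) hδ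
    have hsum0 : 0 ≤ ∑ k ∈ Finset.range n, (N k + δ) :=
      Finset.sum_nonneg fun k _ => (hpos k).le
    have hPδ : 0 < P + δ := add_pos_of_nonneg_of_pos hP0 hδ
    have hT0 : 0 < T := add_pos_of_pos_of_nonneg (pow_pos hPδ 2) hsum0
    have hs : 0 < √T := Real.sqrt_pos.mpr hT0
    have hPs : P + δ ≤ √T := Real.le_sqrt_of_sq_le (by linarith)
    have hFD := integrable_smoothYoung_of_orliczNorm_lt hr hDm hs (by
      rw [hPe]
      exact (ENNReal.ofReal_lt_ofReal_iff hs).mpr (by linarith))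
    have hcond : ∀ k, (fun ω => phiYoung 1 r
        (|(μ[fun ω => (e k ω / √T) ^ 2 | ℱ k]) ω| / ((N k + δ) / T))) =ᵐ[μ]
        fun ω => phiYoung 1 r (|(μ[fun ω => e k ω ^ 2 | ℱ k]) ω| / (N k + δ)) := fun k => by
      simp only [div_pow, Real.sq_sqrt hT0.le]
      filter_upwards [condExp_div_const (μ := μ) (m := ℱ k) (fun ω => e k ω ^ 2) T] with ω hω
      rw [hω, abs_div, abs_of_pos hT0, div_div_div_cancel_right₀ hT0.ne']
    have hv := fun k (hk : k < n) => integrable_phiYoung_of_orliczNorm_lt (μ := μ)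
      (p := 1) (r := r) zero_le_one hr
      (X := μ[fun ω => e k ω ^ 2 | ℱ k]) integrable_condExp.1 (hpos k) (by
        rw [hNe k hk]
        exact (ENNReal.ofReal_lt_ofReal_iff (hpos k)).mpr (by linarith))
    have key := integral_smoothYoung_sum_le_of_condExp (μ := μ) hr hℱ hmono (n := n)
      (e := fun k ω => e k ω / √T) (l := fun k => (N k + δ) / T) (M := 2 ^ r)
      (D := fun ω => D ω / √T)
      (fun k hk => (he k hk).mul_const _)
      (fun k hk => (hInt k hk).div_const _)
      (fun k hk => by
        filter_upwards [condExp_div_const (μ := μ) (m := ℱ k) (e k) (√T), hmart k hk] with ω h1 h2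
        rw [h1, h2]; simp)
      (fun k _ => div_pos (hpos k) hT0)
      (by
        rw [← Finset.sum_div, div_le_one hT0]
        linarith [sq_nonneg (P + δ)])
      (fun k hk => (integrable_congr (hcond k)).mpr (hv k hk).1)
      (fun k hk => (integral_congr_ae (hcond k)).trans_le (hv k hk).2)
      (hDm.mul_const _)
      (fun ω => div_nonneg (hD0 ω) hs.le)
      (fun k hk ω => by
        rw [abs_div, abs_of_pos hs]
        exact div_le_div_of_nonneg_right (hD k hk ω) hs.le)
      hFD.1 hFD.2
    simp only [← Finset.sum_div] at key
    exact orliczNorm_two_le_of_integral_smoothYoung_le hr hs key.1 key.2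
  have hlim : orliczNorm μ 2 r (fun ω => ∑ k ∈ Finset.range n, e k ω)
      ≤ ENNReal.ofReal (rosenthalConst r * √(P ^ 2 + ∑ k ∈ Finset.range n, N k)) := by
    have hcont : Continuous fun δ : ℝ => ENNReal.ofReal (rosenthalConst r
        * √((P + δ) ^ 2 + ∑ k ∈ Finset.range n, (N k + δ))) := by
      refine ENNReal.continuous_ofReal.comp ?_
      fun_prop
    have ht := (hcont.tendsto 0).mono_left (nhdsWithin_le_nhds (s := Set.Ioi 0))
    simp only [add_zero] at ht
    exact ge_of_tendsto ht (Filter.eventually_of_mem self_mem_nhdsWithin fun δ hδ => hbound δ hδ)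
  have hS0 : 0 ≤ ∑ k ∈ Finset.range n, N k := Finset.sum_nonneg fun k _ => hN0 k
  have hsq : √(P ^ 2 + ∑ k ∈ Finset.range n, N k) ≤ P + √(∑ k ∈ Finset.range n, N k) := by
    refine (Real.sqrt_le_left (by positivity)).mpr ?_
    nlinarith [Real.sq_sqrt hS0, mul_nonneg hP0 (Real.sqrt_nonneg (∑ k ∈ Finset.range n, N k))]
  calc _ ≤ ENNReal.ofReal (rosenthalConst r * (P + √(∑ k ∈ Finset.range n, N k))) :=
        hlim.trans (ENNReal.ofReal_le_ofReal (by gcongr))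
    _ = _ := by
        rw [ENNReal.ofReal_mul hc.le, ENNReal.ofReal_add hP0 (by positivity), mul_add, hPe,
          Real.sqrt_eq_rpow, ← ENNReal.ofReal_rpow_of_nonneg hS0 (by norm_num),
          ENNReal.ofReal_sum_of_nonneg fun k _ => hN0 k,
          Finset.sum_congr rfl fun k hk => hNe k (Finset.mem_range.mp hk)]

end OrliczNorm

/-- Burkholder- and Rosenthal-type inequalities in the Orlicz spaces `𝕃_{2,r}` for martingale
difference sequences. -/
theorem burkholder_orlicz (r : ℝ) (hr : 0 ≤ r) :
    ∃ C K : ℝ≥0∞, C ≠ ⊤ ∧ K ≠ ⊤ ∧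
      ∀ (Ω : Type*) (mΩ : MeasurableSpace Ω) (μ : Measure Ω),
        IsProbabilityMeasure μ →
        ∀ (n : ℕ) (hn : 1 ≤ n) (ℱ : ℕ → MeasurableSpace Ω) (d : ℕ → Ω → ℝ),
        (∀ k, ℱ k ≤ mΩ) →
        Monotone ℱ →
        (∀ k, 1 ≤ k → k ≤ n → StronglyMeasurable[ℱ k] (d k)) →
        (∀ k, 1 ≤ k → k ≤ n → Integrable (d k) μ) →
        (∀ k, 1 ≤ k → k ≤ n → μ[d k | ℱ (k - 1)] =ᵐ[μ] 0) →
        (orliczNorm μ 2 r (fun ω => ∑ k ∈ Finset.Icc 1 n, d k ω) ≤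
            C * orliczNorm μ 2 r
              (fun ω => (Finset.Icc 1 n).sup' (Finset.nonempty_Icc.mpr hn)
                fun k => |d k ω|) +
            C * (∑ k ∈ Finset.Icc 1 n,
                orliczNorm μ 1 r (μ[fun ω => (d k ω) ^ 2 | ℱ (k - 1)])) ^ ((1 : ℝ) / 2)) ∧
        (orliczNorm μ 2 r (fun ω => ∑ k ∈ Finset.Icc 1 n, d k ω)) ^ (2 : ℝ) ≤
            K * ∑ k ∈ Finset.Icc 1 n, (orliczNorm μ 2 r (d k)) ^ (2 : ℝ) := by
  refine ⟨ENNReal.ofReal (rosenthalConst r), ENNReal.ofReal (burkholderConst r ^ 2),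
    ENNReal.ofReal_ne_top, ENNReal.ofReal_ne_top, ?_⟩
  intro Ω mΩ μ _ n hn ℱ d hℱ hmono hd hInt hmart
  have he : ∀ k < n, StronglyMeasurable[ℱ (k + 1)] (d (k + 1)) := fun k hk =>
    hd (k + 1) (by omega) hk
  have hInt' : ∀ k < n, Integrable (d (k + 1)) μ := fun k hk => hInt (k + 1) (by omega) hk
  have hmart' : ∀ k < n, μ[d (k + 1) | ℱ k] =ᵐ[μ] 0 := fun k hk => hmart (k + 1) (by omega) hk
  have hshift : ∀ {M : Type} [AddCommMonoid M] (f : ℕ → M),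
      ∑ k ∈ Finset.Icc 1 n, f k = ∑ k ∈ Finset.range n, f (k + 1) := fun f => by
    rw [Finset.range_eq_Ico, Finset.sum_Ico_add' f 0 n 1]
    rfl
  simp only [hshift, Nat.add_sub_cancel]
  refine ⟨?_, orliczNorm_sum_sq_le hr hℱ hmono hn he hInt' hmart'⟩
  have hle : ∀ k < n, ∀ ω, |d (k + 1) ω| ≤
      (Finset.Icc 1 n).sup' (Finset.nonempty_Icc.mpr hn) fun k => |d k ω| := fun k hk ω =>
    Finset.le_sup' (fun k => |d k ω|) (Finset.mem_Icc.mpr ⟨by omega, hk⟩)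
  refine orliczNorm_sum_le hr hℱ hmono he hInt' hmart' ?_
    (fun ω => (abs_nonneg _).trans (hle 0 hn ω)) hle
  refine Measurable.aestronglyMeasurable ?_
  have hmax := Finset.measurable_sup' (Finset.nonempty_Icc.mpr hn) (f := fun k ω => |d k ω|)
    fun k hk => by
      have hk := Finset.mem_Icc.mp hk
      exact continuous_abs.measurable.comp ((hd k hk.1 hk.2).mono (hℱ k)).measurable
  convert! hmax using 1
  ext ω
  simp
end
end
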